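/- Let d ≥ 1 and let (q,r) be a Schrödinger-admissible pair: 2 ≤ q, r ≤ ∞, 1/q = (d/2)(1/2 − 1/r), and (q,r,d) ≠ (2,∞,2). Then there exists a constant C > 0 such that for every Schwartz function u₀ : ℝ^d → ℂ, the free Schrödinger evolution u(t,x) := (e^{itΔ}u₀)(x) satisfies the homogeneous Strichartz estimate ‖u‖_{L^q_t L^r_x(ℝ × ℝ^d)} ≤ C ‖u₀‖_{L²(ℝ^d)}, where ‖u‖_{L^q_t L^r_x} := ( ∫_ℝ ‖u(t,·)‖_{L^r(ℝ^d)}^q dt )^{1/q} (with the essential supremum when q = ∞ or r = ∞). -/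

import Mathlib

/-!
The proof is a `TT*` argument for the regularisation of `e^{itΔ}` by the heat flow. For `ε > 0`, the
value at `(t, x)` of `e^{(ε + it)Δ} u₀` is the inner product of `u₀` with a vector of `L²`, the
conjugated heat kernel at the complex time `ε + it` centred at `x` (`heatVec`). By the semigroup
law, the Gram kernel of these vectors is again a heat kernel, at the complex time `2ε + i(s - t)`.
This gives, uniformly in `ε`, the dispersive decay `|t - s|^{-d/2}` at distinct times and, at equal
times, a convolution kernel of mass one, hence an energy bound by Schur's test
(`isDispersive_heatVec`). The remaining harmonic analysis uses only these two properties, collected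
in `IsDispersive`. By duality, the claim becomes the control of `‖∫∫ F(t, x) e(t, x) dx dt‖` by the
norm of `F` in `L^{q'}_t L^{r'}_x` (`DualEstimate`).

For `2 < r < ∞`, `F` is cut at each time into dyadic layers according to the size of `|F(t, x)|`
relative to `‖F(t)‖_{r'}`. On each layer the `L¹` and `L²` norms are comparable to powers of two
times a quantity that is summable over the layers, which takes the place of interpolation.

* If `q > 2`, Schur's test sums the layers at fixed times and the Hardy–Littlewood–Sobolev
  inequality concludes in time.
* If `q = 2`, the bilinear form is also cut into dyadic shells `|t - s| ~ 2^j`. As in the work of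
  Keel and Tao, the form between layers `k` and `l` on shell `j` has exponential decay in
  `|k - j| + |l - j|`, by the dispersive bound and two mixed energy–dispersive bounds, so that all
  sums converge.

The pair `(∞, 2)` is the energy estimate. If `r = ∞` and `q` is finite, then `d = 1` and `q = 4`;
the dispersive bound is already an `L¹` bound in space and the Hardy–Littlewood–Sobolev inequality
applies directly. Finally `ε → 0`: the regularised evolutions converge pointwise for `t ≠ 0`, and
Fatou's lemma passes the uniform bounds to the limit.
-/

open scoped BigOperators ENNReal
open MeasureTheory Complex

/-- The free Schrödinger propagator `e^{itΔ}u₀`, given by the oscillatory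
integral against the Schrödinger kernel for `t ≠ 0` and by `u₀` for `t = 0`. -/
noncomputable def schrodingerProp {d : ℕ} (u₀ : EuclideanSpace ℝ (Fin d) → ℂ)
    (t : ℝ) (x : EuclideanSpace ℝ (Fin d)) : ℂ :=
  if t = 0 then u₀ x
  else (4 * (Real.pi : ℂ) * Complex.I * (t : ℂ)) ^ (-(d : ℂ) / 2) *
    ∫ y : EuclideanSpace ℝ (Fin d),
      Complex.exp (Complex.I * ((‖x - y‖ ^ 2 : ℝ) : ℂ) / (4 * (t : ℂ))) * u₀ y

/-- The mixed space-time Lebesgue norm `‖u‖_{L^q_t L^r_x}`, with the essential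
supremum when `q = ∞` (the inner `L^r` norm already handles `r = ∞`). -/
noncomputable def mixedLpNorm {d : ℕ} (q r : ℝ≥0∞)
    (u : ℝ → EuclideanSpace ℝ (Fin d) → ℂ) : ℝ≥0∞ :=
  if q = ∞ then essSup (fun t => eLpNorm (u t) r volume) volume
  else (∫⁻ t, (eLpNorm (u t) r volume) ^ q.toReal) ^ (1 / q.toReal)

/-! ### The Hardy–Littlewood–Sobolev inequality on the line -/

/-- The Riesz kernel `|x|^{-a}` on the line, valued in `[0, ∞]` (so it is `∞` at `0` if `0 < a`). -/
noncomputable def rieszKernel (a x : ℝ) : ℝ≥0∞ := ENNReal.ofReal |x| ^ (-a)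

@[fun_prop]
lemma measurable_rieszKernel (a : ℝ) : Measurable (rieszKernel a) := by
  unfold rieszKernel; fun_prop

lemma rieszKernel_neg (a x : ℝ) : rieszKernel a (-x) = rieszKernel a x := by simp [rieszKernel]

lemma rieszKernel_sub_comm (a x y : ℝ) : rieszKernel a (x - y) = rieszKernel a (y - x) := by
  rw [← rieszKernel_neg, neg_sub]

lemma rieszKernel_rpow (a b x : ℝ) : rieszKernel a x ^ b = rieszKernel (a * b) x := by
  rw [rieszKernel, rieszKernel, ← ENNReal.rpow_mul, neg_mul]

lemma lintegral_comp_abs (g : ℝ → ℝ≥0∞) : ∫⁻ x, g |x| = 2 * ∫⁻ x in Set.Ioi 0, g x := by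
  have right : ∫⁻ x in Set.Ioi 0, g |x| = ∫⁻ x in Set.Ioi 0, g x :=
    setLIntegral_congr_fun measurableSet_Ioi fun x hx => by rw [abs_of_pos hx]
  have left : ∫⁻ x in (Set.Ioi (0 : ℝ))ᶜ, g |x| = ∫⁻ x in Set.Ioi 0, g |x| := by
    rw [Set.compl_Ioi, setLIntegral_congr (Iio_ae_eq_Iic (a := (0 : ℝ))).symm,
      ← (Measure.measurePreserving_neg (volume : Measure ℝ)).setLIntegral_comp_preimage_emb
        (MeasurableEquiv.neg ℝ).measurableEmbedding (fun x => g |x|) (Set.Ioi 0)]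
    simp
  rw [← lintegral_add_compl _ measurableSet_Ioi, left, right, two_mul]

lemma setLIntegral_comp_abs {S : Set ℝ} (hS : MeasurableSet S) (g : ℝ → ℝ≥0∞) :
    ∫⁻ x in {x | |x| ∈ S}, g |x| = 2 * ∫⁻ x in S ∩ Set.Ioi 0, g x := by
  rw [← Measure.restrict_restrict hS, ← lintegral_indicator hS, ← lintegral_comp_abs]
  exact (lintegral_indicator (hS.preimage measurable_abs) _).symm

lemma lintegral_ofReal_rpow_eq {S : Set ℝ} (hS : MeasurableSet S) (hpos : ∀ x ∈ S, 0 < x) {b : ℝ}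
    (hb : IntegrableOn (fun x => x ^ b) S) :
    ∫⁻ x in S, ENNReal.ofReal x ^ b = ENNReal.ofReal (∫ x in S, x ^ b) := by
  rw [ofReal_integral_eq_lintegral_ofReal hb
    ((ae_restrict_iff' hS).2 (.of_forall fun x hx => Real.rpow_nonneg (hpos x hx).le _))]
  exact setLIntegral_congr_fun hS fun x hx => ENNReal.ofReal_rpow_of_pos (hpos x hx)

lemma setLIntegral_rieszKernel_near {a : ℝ} (ha : a < 1) {R : ℝ} (hR : 0 < R) :
    ∫⁻ x in {x | |x| ≤ R}, rieszKernel a x = ENNReal.ofReal (2 / (1 - a) * R ^ (1 - a)) := by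
  have hint : IntegrableOn (fun x : ℝ => x ^ (-a)) (Set.Ioc 0 R) :=
    (intervalIntegrable_iff_integrableOn_Ioc_of_le hR.le).1
      (intervalIntegral.intervalIntegrable_rpow' (by linarith))
  have hval : ∫ x in Set.Ioc 0 R, x ^ (-a) = R ^ (1 - a) / (1 - a) := by
    rw [← intervalIntegral.integral_of_le hR.le, integral_rpow (Or.inl (by linarith)),
      Real.zero_rpow (by linarith), sub_zero, neg_add_eq_sub]
  have hset : Set.Iic R ∩ Set.Ioi 0 = Set.Ioc 0 R := by ext; simp [and_comm]
  calc ∫⁻ x in {x | |x| ≤ R}, rieszKernel a x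
      = 2 * ∫⁻ x in Set.Ioc 0 R, ENNReal.ofReal x ^ (-a) := by
        rw [← hset]
        exact setLIntegral_comp_abs measurableSet_Iic fun x => ENNReal.ofReal x ^ (-a)
    _ = ENNReal.ofReal 2 * ENNReal.ofReal (R ^ (1 - a) / (1 - a)) := by
        rw [lintegral_ofReal_rpow_eq measurableSet_Ioc (fun x hx => hx.1) hint, hval,
          ENNReal.ofReal_ofNat]
    _ = _ := by rw [← ENNReal.ofReal_mul zero_le_two, mul_div_left_comm, mul_comm]

lemma setLIntegral_rieszKernel_far {a : ℝ} (ha : 1 < a) {R : ℝ} (hR : 0 < R) :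
    ∫⁻ x in {x | R < |x|}, rieszKernel a x = ENNReal.ofReal (2 / (a - 1) * R ^ (1 - a)) := by
  have hval : ∫ x in Set.Ioi R, x ^ (-a) = R ^ (1 - a) / (a - 1) := by
    rw [integral_Ioi_rpow_of_lt (by linarith) hR, neg_add_eq_sub, neg_div, ← div_neg, neg_sub]
  have hset : Set.Ioi R ∩ Set.Ioi 0 = Set.Ioi R :=
    Set.inter_eq_left.2 (Set.Ioi_subset_Ioi hR.le)
  calc ∫⁻ x in {x | R < |x|}, rieszKernel a x
      = 2 * ∫⁻ x in Set.Ioi R, ENNReal.ofReal x ^ (-a) := by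
        rw [← hset]
        exact setLIntegral_comp_abs measurableSet_Ioi fun x => ENNReal.ofReal x ^ (-a)
    _ = ENNReal.ofReal 2 * ENNReal.ofReal (R ^ (1 - a) / (a - 1)) := by
        rw [lintegral_ofReal_rpow_eq measurableSet_Ioi (fun x hx => hR.trans hx)
          (integrableOn_Ioi_rpow_of_lt (by linarith) hR), hval, ENNReal.ofReal_ofNat]
    _ = _ := by rw [← ENNReal.ofReal_mul zero_le_two]; ring_nf

lemma setLIntegral_comp_sub_left {S : Set ℝ} (g : ℝ → ℝ≥0∞) (s : ℝ) :
    ∫⁻ t in {t | s - t ∈ S}, g (s - t) = ∫⁻ x in S, g x :=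
  (Measure.measurePreserving_sub_left volume s).setLIntegral_comp_preimage_emb
    (MeasurableEquiv.subLeft s).measurableEmbedding g S

lemma setLIntegral_mul_rieszKernel_near_le {a : ℝ} (ha : a < 1) {f : ℝ → ℝ≥0∞} {B : ℝ≥0∞}
    (hfB : ∀ t, f t ≤ B) {R : ℝ} (hR : 0 < R) (s : ℝ) :
    ∫⁻ t in {t | |s - t| ≤ R}, f t * rieszKernel a (s - t)
      ≤ B * ENNReal.ofReal (2 / (1 - a) * R ^ (1 - a)) :=
  calc ∫⁻ t in {t | |s - t| ≤ R}, f t * rieszKernel a (s - t)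
      ≤ ∫⁻ t in {t | |s - t| ≤ R}, B * rieszKernel a (s - t) := by gcongr with t; exact hfB t
    _ = B * ∫⁻ x in {x | |x| ≤ R}, rieszKernel a x := by
        rw [lintegral_const_mul _ (by fun_prop)]
        exact congrArg (B * ·) (setLIntegral_comp_sub_left (S := {x | |x| ≤ R}) (rieszKernel a) s)
    _ = B * ENNReal.ofReal (2 / (1 - a) * R ^ (1 - a)) := by
        rw [setLIntegral_rieszKernel_near ha hR]

lemma setLIntegral_mul_rieszKernel_far_le {p q a : ℝ} (hpq : p.HolderConjugate q) (ha : 1 < a * q)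
    {f : ℝ → ℝ≥0∞} (hf : Measurable f) {R : ℝ} (hR : 0 < R) (s : ℝ) :
    ∫⁻ t in {t | R < |s - t|}, f t * rieszKernel a (s - t)
      ≤ (∫⁻ t, f t ^ p) ^ (1 / p) *
        ENNReal.ofReal (2 / (a * q - 1) * R ^ (1 - a * q)) ^ (1 / q) := by
  have hkernel : ∫⁻ t in {t | R < |s - t|}, rieszKernel a (s - t) ^ q
      = ENNReal.ofReal (2 / (a * q - 1) * R ^ (1 - a * q)) := by
    simp_rw [rieszKernel_rpow]
    rw [← setLIntegral_rieszKernel_far ha hR]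
    exact setLIntegral_comp_sub_left (S := {x | R < |x|}) (rieszKernel (a * q)) s
  refine (ENNReal.lintegral_mul_le_Lp_mul_Lq _ hpq hf.aemeasurable (by fun_prop)).trans ?_
  rw [hkernel]
  have := hpq.nonneg
  gcongr
  exact Measure.restrict_le_self

/-- The choice `R = A / y ^ p` balances the near and far parts of the Riesz potential. -/
lemma exists_balanced_radius {p : ℝ} (hp : 1 < p) {A y : ℝ} (hA : 0 < A) (hy : 0 < y) :
    ∃ R : ℝ, 0 < R ∧ y * (y * R ^ (2 / p - 1)) = A ^ (2 / p - 1) * y ^ p ∧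
      y * (A ^ (1 / p) * (R⁻¹) ^ (1 - 1 / p)) = A ^ (2 / p - 1) * y ^ p := by
  have hp0 : p ≠ 0 := by linarith
  have hyp : 0 < y ^ p := Real.rpow_pos_of_pos hy _
  refine ⟨A / y ^ p, by positivity, ?_, ?_⟩
  · have hy2 : y * y = y ^ p * (y ^ p) ^ (2 / p - 1) := by
      rw [← Real.rpow_mul hy.le, ← Real.rpow_add hy, ← sq, ← Real.rpow_two]
      congr 1
      field_simp
      ring
    have : (y ^ p) ^ (2 / p - 1) ≠ 0 := (Real.rpow_pos_of_pos hyp _).ne'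
    rw [Real.div_rpow hA.le hyp.le, ← mul_assoc, hy2]
    field_simp
  · have hyy : y ^ p = y * (y ^ p) ^ (1 - 1 / p) := by
      nth_rewrite 2 [← Real.rpow_one y]
      rw [← Real.rpow_mul hy.le, ← Real.rpow_add hy]
      congr 1
      field_simp
      ring
    have hAA : A ^ (1 / p) = A ^ (2 / p - 1) * A ^ (1 - 1 / p) := by
      rw [← Real.rpow_add hA]; congr 1; ring
    have : A ^ (1 - 1 / p) ≠ 0 := (Real.rpow_pos_of_pos hA _).ne'
    rw [inv_div, Real.div_rpow hyp.le hA.le, hAA]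
    nth_rewrite 2 [hyy]
    field_simp

/-- The constant in the Hardy–Littlewood–Sobolev inequality restricted to `f t ≤ f s`. -/
noncomputable def hlsConst (p : ℝ) : ℝ≥0∞ := ENNReal.ofReal (2 / (2 / p - 1) + 2)

lemma hlsConst_ne_zero {p : ℝ} (hp : 0 < p) (hp2 : p < 2) : hlsConst p ≠ 0 := by
  have : 1 < 2 / p := (one_lt_div hp).2 hp2
  have : 0 < 2 / (2 / p - 1) := div_pos two_pos (by linarith)
  exact (ENNReal.ofReal_pos.2 (by linarith)).ne'

lemma lintegral_mul_rieszKernel_le {p : ℝ} (hp1 : 1 < p) (hp2 : p < 2) {f : ℝ → ℝ≥0∞}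
    (hf : Measurable f) {B : ℝ≥0∞} (hfB : ∀ t, f t ≤ B) {R : ℝ} (hR : 0 < R) (s : ℝ) :
    ∫⁻ t, f t * rieszKernel (2 - 2 / p) (s - t)
      ≤ B * ENNReal.ofReal (2 / (2 / p - 1) * R ^ (2 / p - 1)) +
        2 * ((∫⁻ t, f t ^ p) ^ (1 / p) * ENNReal.ofReal (R⁻¹ ^ (1 - 1 / p))) := by
  have hp0 : 0 < p := by linarith
  have hpq : p.HolderConjugate (p / (p - 1)) := Real.HolderConjugate.conjExponent hp1
  have hpq' : 1 / (p / (p - 1)) = 1 - 1 / p := by rw [one_div, one_div, ← hpq.one_sub_inv]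
  have h1p : 0 ≤ 1 - 1 / p := hpq' ▸ one_div_nonneg.2 hpq.symm.nonneg
  have haq : (2 - 2 / p) * (p / (p - 1)) = 2 := by
    have : p - 1 ≠ 0 := by linarith
    field_simp
  have near := setLIntegral_mul_rieszKernel_near_le (a := 2 - 2 / p)
    (by have : 1 < 2 / p := (one_lt_div hp0).2 hp2
        linarith) hfB hR s
  have far := setLIntegral_mul_rieszKernel_far_le (a := 2 - 2 / p) hpq (by linarith) hf hR s
  have h2 : (2 : ℝ≥0∞) ^ (1 - 1 / p) ≤ 2 :=
    (ENNReal.rpow_le_rpow_of_exponent_le one_le_two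
      (sub_le_self _ (by positivity))).trans_eq (ENNReal.rpow_one 2)
  have hsplit : {t : ℝ | |s - t| ≤ R}ᶜ = {t | R < |s - t|} := by ext; simp
  rw [haq, hpq', show 2 / (2 - 1) * R ^ ((1 : ℝ) - 2) = 2 * R⁻¹ by norm_num [Real.rpow_neg_one],
    ENNReal.ofReal_mul zero_le_two, ENNReal.mul_rpow_of_nonneg _ _ h1p, ENNReal.ofReal_ofNat,
    mul_left_comm, ENNReal.ofReal_rpow_of_pos (inv_pos.2 hR)] at far
  rw [← lintegral_add_compl _ (measurableSet_le (f := fun t => |s - t|) (g := fun _ => R)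
    (by fun_prop) (by fun_prop)), hsplit, show 2 / p - 1 = 1 - (2 - 2 / p) by ring]
  gcongr
  exact far.trans (by gcongr)

lemma mul_lintegral_rieszKernel_le {p : ℝ} (hp1 : 1 < p) (hp2 : p < 2) {f g : ℝ → ℝ≥0∞}
    (hg : Measurable g) (hgf : g ≤ f) {s : ℝ} (hgs : ∀ t, g t ≤ f s) (hs : f s ≠ ∞)
    (hf0 : ∫⁻ t, f t ^ p ≠ 0) (hf : ∫⁻ t, f t ^ p ≠ ∞) :
    f s * ∫⁻ t, g t * rieszKernel (2 - 2 / p) (s - t)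
      ≤ hlsConst p * (∫⁻ t, f t ^ p) ^ (2 / p - 1) * f s ^ p := by
  rcases eq_or_ne (f s) 0 with hs0 | hs0
  · simp [hs0]
  have h2p : 0 < 2 / p - 1 := sub_pos.2 ((one_lt_div (by linarith)).2 hp2)
  set A := (∫⁻ t, f t ^ p).toReal
  set y := (f s).toReal
  have hA : ∫⁻ t, f t ^ p = ENNReal.ofReal A := (ENNReal.ofReal_toReal hf).symm
  have hy : f s = ENNReal.ofReal y := (ENNReal.ofReal_toReal hs).symm
  have hA0 : 0 < A := ENNReal.toReal_pos hf0 hf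
  have hy0 : 0 < y := ENNReal.toReal_pos hs0 hs
  obtain ⟨R, hR, hnear, hfar⟩ := exists_balanced_radius hp1 hA0 hy0
  calc f s * ∫⁻ t, g t * rieszKernel (2 - 2 / p) (s - t)
      ≤ f s * (f s * ENNReal.ofReal (2 / (2 / p - 1) * R ^ (2 / p - 1)) +
        2 * ((∫⁻ t, f t ^ p) ^ (1 / p) * ENNReal.ofReal (R⁻¹ ^ (1 - 1 / p)))) := by
        refine mul_le_mul_right ((lintegral_mul_rieszKernel_le hp1 hp2 hg hgs hR s).trans ?_) _
        gcongr with t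
        exact hgf t
    _ = ENNReal.ofReal (2 / (2 / p - 1) * (y * (y * R ^ (2 / p - 1)))
          + 2 * (y * (A ^ (1 / p) * R⁻¹ ^ (1 - 1 / p)))) := by
        rw [hA, hy, ENNReal.ofReal_rpow_of_pos hA0, ← ENNReal.ofReal_ofNat 2,
          ← ENNReal.ofReal_mul (by positivity), ← ENNReal.ofReal_mul (by positivity),
          ← ENNReal.ofReal_mul (by positivity), ← ENNReal.ofReal_add (by positivity)
          (by positivity), ← ENNReal.ofReal_mul hy0.le]
        ring_nf
    _ = hlsConst p * (∫⁻ t, f t ^ p) ^ (2 / p - 1) * f s ^ p := by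
        rw [hnear, hfar, ← add_mul, ← mul_assoc, hlsConst, hA, hy, ENNReal.ofReal_rpow_of_pos hA0,
          ENNReal.ofReal_rpow_of_pos hy0, ENNReal.ofReal_mul (by positivity),
          ENNReal.ofReal_mul (by positivity)]

lemma lintegral_lintegral_le_two_mul {α : Type*} [MeasurableSpace α] {μ : Measure α} [SFinite μ]
    {f : α → ℝ≥0∞} (hf : Measurable f) {K : α × α → ℝ≥0∞} (hK : Measurable K)
    (hK_symm : ∀ z, K z.swap = K z) :
    ∫⁻ s, ∫⁻ t, f s * f t * K (s, t) ∂μ ∂μ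
      ≤ 2 * ∫⁻ s, f s * ∫⁻ t, {t | f t ≤ f s}.indicator f t * K (s, t) ∂μ ∂μ := by
  set g : α × α → ℝ≥0∞ := {z : α × α | f z.2 ≤ f z.1}.indicator fun z => f z.2
  have hg : Measurable g := (hf.comp measurable_snd).indicator
    (measurableSet_le (hf.comp measurable_snd) (hf.comp measurable_fst))
  set J : α × α → ℝ≥0∞ := fun z => f z.1 * (g z * K z)
  have hJ : Measurable J := by fun_prop
  have hsymm : ∀ s t, f s * f t * K (s, t) ≤ J (t, s) + J (s, t) := by
    intro s t
    rcases le_total (f t) (f s) with h | h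
    · exact le_trans (by simp [J, g, h, mul_assoc]) le_add_self
    · exact le_trans (by simp [J, g, h, ← hK_symm (s, t), mul_left_comm, mul_assoc]) le_self_add
  calc ∫⁻ s, ∫⁻ t, f s * f t * K (s, t) ∂μ ∂μ
      ≤ ∫⁻ s, ∫⁻ t, (J (t, s) + J (s, t)) ∂μ ∂μ := by gcongr with s t; exact hsymm s t
    _ = 2 * ∫⁻ s, ∫⁻ t, J (s, t) ∂μ ∂μ := by
        rw [two_mul]
        nth_rewrite 2 [lintegral_lintegral_swap (by fun_prop)]
        rw [← lintegral_add_left (by fun_prop)]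
        exact lintegral_congr fun s => lintegral_add_left (f := fun t => J (t, s)) (by fun_prop) _
    _ = _ := by
        congr 1
        exact lintegral_congr fun s => lintegral_const_mul (f s)
          (f := fun t => g (s, t) * K (s, t)) (by fun_prop)

lemma lintegral_lintegral_rieszKernel_le {p : ℝ} (hp1 : 1 < p) (hp2 : p < 2) {f : ℝ → ℝ≥0∞}
    (hf : Measurable f) :
    ∫⁻ s, ∫⁻ t, f s * f t * rieszKernel (2 - 2 / p) (s - t)
      ≤ 2 * hlsConst p * (∫⁻ t, f t ^ p) ^ (2 / p) := by
  have hp0 : 0 < p := by linarith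
  rcases eq_or_ne (∫⁻ t, f t ^ p) 0 with hf0 | hf0
  · have hf_ae : ∀ᵐ s, f s = 0 := by
      filter_upwards [(lintegral_eq_zero_iff (by fun_prop)).1 hf0] with s hs
      exact (ENNReal.rpow_eq_zero_iff_of_pos hp0).1 hs
    rw [lintegral_congr_ae (g := 0) (hf_ae.mono fun s hs => by simp [hs])]
    simp
  rcases eq_or_ne (∫⁻ t, f t ^ p) ∞ with hf_top | hf_top
  · simp [hf_top, ENNReal.top_rpow_of_pos, ENNReal.mul_top, hlsConst_ne_zero hp0 hp2, hp0]
  have hpoint : ∀ᵐ s, f s * ∫⁻ t, {t | f t ≤ f s}.indicator f t * rieszKernel (2 - 2 / p) (s - t)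
      ≤ hlsConst p * (∫⁻ t, f t ^ p) ^ (2 / p - 1) * f s ^ p := by
    filter_upwards [ae_lt_top (by fun_prop) hf_top] with s hs
    exact mul_lintegral_rieszKernel_le hp1 hp2
      (hf.indicator (measurableSet_le hf measurable_const)) (fun t => Set.indicator_le_self _ f t)
      (fun t => Set.indicator_apply_le' id fun _ => zero_le)
      (fun h => by simp [h, hp0] at hs) hf0 hf_top
  calc ∫⁻ s, ∫⁻ t, f s * f t * rieszKernel (2 - 2 / p) (s - t)
      ≤ 2 * ∫⁻ s, f s * ∫⁻ t, {t | f t ≤ f s}.indicator f t *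
          rieszKernel (2 - 2 / p) (s - t) :=
        lintegral_lintegral_le_two_mul hf (K := fun z => rieszKernel (2 - 2 / p) (z.1 - z.2))
          (by fun_prop) fun z => rieszKernel_sub_comm _ _ _
    _ ≤ 2 * ∫⁻ s, hlsConst p * (∫⁻ t, f t ^ p) ^ (2 / p - 1) * f s ^ p := by
        gcongr 2 * ?_
        exact lintegral_mono_ae hpoint
    _ = 2 * hlsConst p * (∫⁻ t, f t ^ p) ^ (2 / p) := by
        rw [lintegral_const_mul _ (by fun_prop), mul_assoc 2, mul_assoc (hlsConst p)]
        nth_rewrite 2 [← ENNReal.rpow_one (∫⁻ t, f t ^ p)]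
        rw [← ENNReal.rpow_add _ _ hf0 hf_top, sub_add_cancel]

/-! ### Schur's test -/

lemma rpow_half_mul_rpow_half (x : ℝ≥0∞) : x ^ (1 / 2 : ℝ) * x ^ (1 / 2 : ℝ) = x := by
  rw [← ENNReal.rpow_add_of_nonneg _ _ (by norm_num) (by norm_num), add_halves, ENNReal.rpow_one]

section Schur

variable {α β : Type*} [MeasurableSpace α] [MeasurableSpace β] {μ : Measure α} {ν : Measure β}

lemma lintegral_mul_le_sqrt_mul_sqrt {f g : α → ℝ≥0∞} (hf : Measurable f) (hg : Measurable g) :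
    ∫⁻ x, f x * g x ∂μ ≤ (∫⁻ x, f x ^ 2 ∂μ) ^ (1 / 2 : ℝ) * (∫⁻ x, g x ^ 2 ∂μ) ^ (1 / 2 : ℝ) := by
  simpa using ENNReal.lintegral_mul_le_Lp_mul_Lq μ Real.HolderConjugate.two_two hf.aemeasurable
    hg.aemeasurable

lemma lintegral_lintegral_mul_le_of_schur [SFinite μ] [SFinite ν] {K : α × β → ℝ≥0∞}
    (hK : Measurable K) {A : ℝ≥0∞} (hrow : ∀ s, ∫⁻ t, K (s, t) ∂ν ≤ A)
    (hcol : ∀ t, ∫⁻ s, K (s, t) ∂μ ≤ A) {f : α → ℝ≥0∞} {g : β → ℝ≥0∞} (hf : Measurable f)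
    (hg : Measurable g) :
    ∫⁻ s, ∫⁻ t, f s * g t * K (s, t) ∂ν ∂μ
      ≤ A * ((∫⁻ s, f s ^ 2 ∂μ) ^ (1 / 2 : ℝ) * (∫⁻ t, g t ^ 2 ∂ν) ^ (1 / 2 : ℝ)) := by
  have hsq (x y : ℝ≥0∞) : (x * y ^ (1 / 2 : ℝ)) ^ 2 = x ^ 2 * y := by
    rw [mul_pow, sq (y ^ _), rpow_half_mul_rpow_half]
  have row : ∫⁻ z, f z.1 ^ 2 * K z ∂μ.prod ν ≤ A * ∫⁻ s, f s ^ 2 ∂μ := by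
    rw [lintegral_prod _ (by fun_prop), ← lintegral_const_mul _ (by fun_prop)]
    gcongr with s
    simp only
    rw [lintegral_const_mul _ (by fun_prop), mul_comm]
    gcongr
    exact hrow s
  have col : ∫⁻ z, g z.2 ^ 2 * K z ∂μ.prod ν ≤ A * ∫⁻ t, g t ^ 2 ∂ν := by
    rw [lintegral_prod_symm _ (by fun_prop), ← lintegral_const_mul _ (by fun_prop)]
    gcongr with t
    simp only
    rw [lintegral_const_mul _ (by fun_prop), mul_comm]
    gcongr
    exact hcol t
  calc ∫⁻ s, ∫⁻ t, f s * g t * K (s, t) ∂ν ∂μ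
      = ∫⁻ z, f z.1 * K z ^ (1 / 2 : ℝ) * (g z.2 * K z ^ (1 / 2 : ℝ)) ∂μ.prod ν := by
        rw [lintegral_prod _ (by fun_prop)]
        refine lintegral_congr fun s => lintegral_congr fun t => ?_
        rw [mul_mul_mul_comm, rpow_half_mul_rpow_half]
    _ ≤ (A * ∫⁻ s, f s ^ 2 ∂μ) ^ (1 / 2 : ℝ) * (A * ∫⁻ t, g t ^ 2 ∂ν) ^ (1 / 2 : ℝ) := by
        refine (lintegral_mul_le_sqrt_mul_sqrt (by fun_prop) (by fun_prop)).trans ?_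
        simp_rw [hsq]
        gcongr
    _ = _ := by
        rw [ENNReal.mul_rpow_of_nonneg _ _ (by norm_num), ENNReal.mul_rpow_of_nonneg _ _
          (by norm_num), mul_mul_mul_comm, rpow_half_mul_rpow_half]

lemma tsum_tsum_mul_le_of_schur {ι κ : Type*} [Countable ι] [Countable κ] {K : ι → κ → ℝ≥0∞}
    {A : ℝ≥0∞} (hrow : ∀ i, ∑' j, K i j ≤ A) (hcol : ∀ j, ∑' i, K i j ≤ A) (f : ι → ℝ≥0∞)
    (g : κ → ℝ≥0∞) :
    ∑' i, ∑' j, f i * g j * K i j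
      ≤ A * ((∑' i, f i ^ 2) ^ (1 / 2 : ℝ) * (∑' j, g j ^ 2) ^ (1 / 2 : ℝ)) := by
  let : MeasurableSpace ι := ⊤
  let : MeasurableSpace κ := ⊤
  have : DiscreteMeasurableSpace ι := ⟨fun _ => trivial⟩
  have : DiscreteMeasurableSpace κ := ⟨fun _ => trivial⟩
  simpa [lintegral_count] using lintegral_lintegral_mul_le_of_schur (μ := Measure.count)
    (ν := Measure.count) (K := fun z : ι × κ => K z.1 z.2) .of_discrete
    (by simpa [lintegral_count] using hrow) (by simpa [lintegral_count] using hcol)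
    (.of_discrete (f := f)) (.of_discrete (f := g))

end Schur

section TTStar

variable {V : Type*} [NormedAddCommGroup V] [InnerProductSpace ℂ V]

lemma enorm_inner_symm (v w : V) : ‖inner ℂ v w‖ₑ = ‖inner ℂ w v‖ₑ := by
  rw [← ofReal_norm, ← ofReal_norm, norm_inner_symm]

lemma enorm_inner_le_enorm_mul_enorm (v w : V) : ‖inner ℂ v w‖ₑ ≤ ‖v‖ₑ * ‖w‖ₑ := by
  simp only [← ofReal_norm, ← ENNReal.ofReal_mul (norm_nonneg v)]
  exact ENNReal.ofReal_le_ofReal (norm_inner_le_norm v w)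

lemma enorm_sq_eq_enorm_inner_self (v : V) : ‖v‖ₑ ^ 2 = ‖inner ℂ v v‖ₑ := by
  rw [← ofReal_norm, ← ofReal_norm, ← ENNReal.ofReal_pow (norm_nonneg _),
    inner_self_eq_norm_sq_to_K]
  simp

variable {α β : Type*} [MeasurableSpace α] [MeasurableSpace β] {μ : Measure α} {ν : Measure β}
  [CompleteSpace V]

lemma enorm_inner_integral_left_le {p : α → V} (hp : Integrable p μ) (v : V) :
    ‖inner ℂ (∫ s, p s ∂μ) v‖ₑ ≤ ∫⁻ s, ‖inner ℂ (p s) v‖ₑ ∂μ := by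
  simp_rw [enorm_inner_symm _ v]
  rw [← integral_inner hp]
  exact enorm_integral_le_lintegral_enorm _

lemma enorm_inner_integral_integral_le {p : α → V} {g : β → V} (hp : Integrable p μ)
    (hg : Integrable g ν) :
    ‖inner ℂ (∫ s, p s ∂μ) (∫ t, g t ∂ν)‖ₑ ≤ ∫⁻ s, ∫⁻ t, ‖inner ℂ (p s) (g t)‖ₑ ∂ν ∂μ := by
  refine (enorm_inner_integral_left_le hp _).trans ?_
  gcongr with s
  rw [← integral_inner hg]
  exact enorm_integral_le_lintegral_enorm _

lemma enorm_integral_sq_le_lintegral {p : α → V} (hp : Integrable p μ) :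
    ‖∫ s, p s ∂μ‖ₑ ^ 2 ≤ ∫⁻ s, ∫⁻ t, ‖inner ℂ (p s) (p t)‖ₑ ∂μ ∂μ := by
  rw [enorm_sq_eq_enorm_inner_self]
  exact enorm_inner_integral_integral_le hp hp

lemma enorm_integral_sq_le_of_schur [SFinite μ] {p : α → V} (hp : Integrable p μ)
    {K : α × α → ℝ≥0∞} (hK : Measurable K) {A : ℝ≥0∞} (hrow : ∀ s, ∫⁻ t, K (s, t) ∂μ ≤ A)
    (hcol : ∀ t, ∫⁻ s, K (s, t) ∂μ ≤ A) {f : α → ℝ≥0∞} (hf : Measurable f)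
    (hpK : ∀ᵐ s ∂μ, ∀ᵐ t ∂μ, ‖inner ℂ (p s) (p t)‖ₑ ≤ f s * f t * K (s, t)) :
    ‖∫ s, p s ∂μ‖ₑ ^ 2 ≤ A * ∫⁻ s, f s ^ 2 ∂μ :=
  calc ‖∫ s, p s ∂μ‖ₑ ^ 2
      ≤ ∫⁻ s, ∫⁻ t, f s * f t * K (s, t) ∂μ ∂μ :=
        (enorm_integral_sq_le_lintegral hp).trans
          (lintegral_mono_ae (hpK.mono fun _ => lintegral_mono_ae))
    _ ≤ A * ∫⁻ s, f s ^ 2 ∂μ := by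
        refine (lintegral_lintegral_mul_le_of_schur hK hrow hcol hf hf).trans_eq ?_
        rw [rpow_half_mul_rpow_half]

lemma ae_ne_real (s : ℝ) : ∀ᵐ t : ℝ, s ≠ t := by
  simp [ae_iff]

lemma enorm_integral_sq_le_of_decay {m : ℝ} (hm1 : 1 < m) (hm2 : m < 2) {p : ℝ → V}
    (hp : Integrable p) {φ : ℝ → ℝ≥0∞} (hφ : Measurable φ) {A : ℝ≥0∞}
    (hdecay : ∀ s t, s ≠ t →
      ‖inner ℂ (p s) (p t)‖ₑ ≤ A * (φ s * φ t * rieszKernel (2 - 2 / m) (s - t))) :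
    ‖∫ t, p t‖ₑ ^ 2 ≤ A * (2 * hlsConst m * (∫⁻ t, φ t ^ m) ^ (2 / m)) :=
  calc ‖∫ t, p t‖ₑ ^ 2
      ≤ ∫⁻ s, ∫⁻ t, A * (φ s * φ t * rieszKernel (2 - 2 / m) (s - t)) :=
        (enorm_integral_sq_le_lintegral hp).trans
          (lintegral_mono fun s => lintegral_mono_ae ((ae_ne_real s).mono (hdecay s)))
    _ = A * ∫⁻ s, ∫⁻ t, φ s * φ t * rieszKernel (2 - 2 / m) (s - t) := by
        rw [← lintegral_const_mul _ (by fun_prop)]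
        exact lintegral_congr fun s => lintegral_const_mul _ (by fun_prop)
    _ ≤ A * (2 * hlsConst m * (∫⁻ t, φ t ^ m) ^ (2 / m)) := by
        gcongr
        exact lintegral_lintegral_rieszKernel_le hm1 hm2 hφ

/-- Schur's test: `|s - t|^{-a}` is integrable on a bounded set of times. -/
lemma enorm_setIntegral_sq_le_of_decay {a R : ℝ} (ha : a < 1) (hR : 0 < R) {I : Set ℝ}
    (hI : MeasurableSet I) (hdiam : ∀ s ∈ I, ∀ t ∈ I, |s - t| ≤ R) {p : ℝ → V}
    (hp : IntegrableOn p I) {f : ℝ → ℝ≥0∞} (hf : Measurable f)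
    (hdecay : ∀ s t, s ≠ t → ‖inner ℂ (p s) (p t)‖ₑ ≤ f s * f t * rieszKernel a (s - t)) :
    ‖∫ t in I, p t‖ₑ ^ 2
      ≤ ENNReal.ofReal (2 / (1 - a) * R ^ (1 - a)) * ∫⁻ t in I, f t ^ 2 := by
  have hball : MeasurableSet {x : ℝ | |x| ≤ R} := measurableSet_le (by fun_prop) (by fun_prop)
  have hk : Measurable ({x : ℝ | |x| ≤ R}.indicator (rieszKernel a)) :=
    (measurable_rieszKernel a).indicator hball
  have hmass : ∫⁻ x, {x : ℝ | |x| ≤ R}.indicator (rieszKernel a) x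
      = ENNReal.ofReal (2 / (1 - a) * R ^ (1 - a)) := by
    rw [lintegral_indicator hball, setLIntegral_rieszKernel_near ha hR]
  refine enorm_integral_sq_le_of_schur hp
    (K := fun z => {x : ℝ | |x| ≤ R}.indicator (rieszKernel a) (z.1 - z.2))
    (hk.comp (by fun_prop)) (fun s => ?_) (fun t => ?_) hf ?_
  · rw [← hmass]
    exact (setLIntegral_le_lintegral _ _).trans_eq (lintegral_sub_left_eq_self _ s)
  · rw [← hmass]
    exact (setLIntegral_le_lintegral _ _).trans_eq (lintegral_sub_right_eq_self _ t)
  · filter_upwards [ae_restrict_mem hI] with s hs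
    filter_upwards [ae_restrict_mem hI, ae_restrict_of_ae (ae_ne_real s)] with t ht hst
    rw [Set.indicator_of_mem (show s - t ∈ {x : ℝ | |x| ≤ R} from hdiam s hs t ht)]
    exact hdecay s t hst

end TTStar

/-! ### Dyadic decompositions -/

lemma two_rpow_add (x y : ℝ) : (2 : ℝ≥0∞) ^ (x + y) = 2 ^ x * 2 ^ y :=
  ENNReal.rpow_add _ _ two_ne_zero ENNReal.ofNat_ne_top

lemma two_rpow_mono {x y : ℝ} (h : x ≤ y) : (2 : ℝ≥0∞) ^ x ≤ 2 ^ y :=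
  ENNReal.rpow_le_rpow_of_exponent_le one_le_two h

lemma two_rpow_ne_top (x : ℝ) : (2 : ℝ≥0∞) ^ x ≠ ∞ :=
  ENNReal.rpow_ne_top_of_ne_zero two_ne_zero ENNReal.ofNat_ne_top

lemma ofReal_two_rpow (x : ℝ) : ENNReal.ofReal ((2 : ℝ) ^ x) = 2 ^ x := by
  rw [← ENNReal.ofReal_rpow_of_pos two_pos, ENNReal.ofReal_ofNat]

/-- The two-sided geometric series `∑_{n ∈ ℤ} 2^{-γ|n|}`. -/
noncomputable def geomSum (γ : ℝ) : ℝ≥0∞ := ∑' n : ℤ, (2 : ℝ≥0∞) ^ (-γ * |(n : ℝ)|)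

lemma geomSum_ne_zero (γ : ℝ) : geomSum γ ≠ 0 := fun h => by
  simpa using ENNReal.tsum_eq_zero.1 h 0

lemma geomSum_ne_top {γ : ℝ} (hγ : 0 < γ) : geomSum γ ≠ ∞ := by
  have hgeom : Summable fun n : ℕ => ((2 : ℝ) ^ (-γ)) ^ n :=
    summable_geometric_of_lt_one (by positivity)
      (Real.rpow_lt_one_of_one_lt_of_neg one_lt_two (neg_lt_zero.2 hγ))
  have hpow (n : ℕ) : (2 : ℝ) ^ (-(γ * n)) = (2 ^ (-γ)) ^ n := by
    rw [← neg_mul, Real.rpow_mul_natCast two_pos.le]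
  have hsum : Summable fun n : ℤ => (2 : ℝ) ^ (-γ * |(n : ℝ)|) :=
    Summable.of_nat_of_neg (hgeom.congr fun n => by simp [hpow])
      (hgeom.congr fun n => by simp [hpow])
  simpa only [geomSum, ofReal_two_rpow] using hsum.tsum_ofReal_ne_top

lemma abs_sub_floor_le_abs_sub_add_one (x y : ℝ) : |y - ⌊x⌋| ≤ |y - x| + 1 := by
  have := abs_sub_le y x ⌊x⌋
  have : |x - ⌊x⌋| ≤ 1 := by
    rw [abs_of_nonneg (sub_nonneg.2 (Int.floor_le x))]
    linarith [Int.lt_floor_add_one x]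
  linarith

lemma tsum_two_rpow_abs_sub_le {γ : ℝ} (hγ : 0 < γ) (x : ℝ) :
    ∑' n : ℤ, (2 : ℝ≥0∞) ^ (-γ * |(n : ℝ) - x|) ≤ 2 ^ γ * geomSum γ := by
  rw [geomSum, ← ENNReal.tsum_mul_left,
    ← (Equiv.subRight ⌊x⌋).tsum_eq fun n : ℤ => (2 : ℝ≥0∞) ^ γ * 2 ^ (-γ * |(n : ℝ)|)]
  refine ENNReal.tsum_le_tsum fun n => ?_
  rw [← two_rpow_add, Equiv.subRight_apply, Int.cast_sub]
  exact two_rpow_mono (by nlinarith [abs_sub_floor_le_abs_sub_add_one x n])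

/-- The reals of dyadic size `2^j`. -/
def shell (j : ℤ) : Set ℝ := {x | (2 : ℝ) ^ (j : ℝ) ≤ |x| ∧ |x| < (2 : ℝ) ^ ((j : ℝ) + 1)}

lemma measurableSet_shell (j : ℤ) : MeasurableSet (shell j) :=
  (measurableSet_le measurable_const (g := fun x : ℝ => |x|) (by fun_prop)).inter
    (measurableSet_lt (f := fun x : ℝ => |x|) (by fun_prop) measurable_const)

lemma measurableSet_sub_mem_shell (j : ℤ) (t : ℝ) : MeasurableSet {s | s - t ∈ shell j} :=
  (measurable_id.sub_const t) (measurableSet_shell j)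

lemma neg_mem_shell {j : ℤ} {x : ℝ} : -x ∈ shell j ↔ x ∈ shell j := by simp [shell]

lemma zero_notMem_shell (j : ℤ) : (0 : ℝ) ∉ shell j := fun h => by
  have : (0 : ℝ) < 2 ^ (j : ℝ) := by positivity
  simpa using this.trans_le h.1

lemma volume_shell_le (j : ℤ) : volume (shell j) ≤ 4 * 2 ^ (j : ℝ) := by
  have hwidth : (2 : ℝ) ^ ((j : ℝ) + 1) - -(2 : ℝ) ^ ((j : ℝ) + 1) = 4 * 2 ^ (j : ℝ) := by
    rw [Real.rpow_add_one two_ne_zero]; ring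
  calc volume (shell j) ≤ volume (Set.Ioo (-((2 : ℝ) ^ ((j : ℝ) + 1))) (2 ^ ((j : ℝ) + 1))) :=
        measure_mono fun x hx => abs_lt.1 hx.2
    _ = 4 * 2 ^ (j : ℝ) := by
        rw [Real.volume_Ioo, hwidth, ENNReal.ofReal_mul (by norm_num), ofReal_two_rpow,
          ENNReal.ofReal_ofNat]

lemma rieszKernel_le_of_mem_shell {a : ℝ} (ha : 0 ≤ a) {j : ℤ} {x : ℝ} (hx : x ∈ shell j) :
    rieszKernel a x ≤ 2 ^ (-(j * a)) := by
  rw [rieszKernel, ENNReal.rpow_neg, ENNReal.rpow_neg, ENNReal.inv_le_inv, ENNReal.rpow_mul]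
  gcongr
  rw [← ofReal_two_rpow]
  exact ENNReal.ofReal_le_ofReal hx.1

lemma exists_mem_shell {x : ℝ} (hx : x ≠ 0) : ∃ j, x ∈ shell j := by
  obtain ⟨n, hle, hlt⟩ := exists_mem_Ico_zpow (abs_pos.2 hx) (one_lt_two : (1 : ℝ) < 2)
  refine ⟨n, by simpa using hle, ?_⟩
  rwa [← Real.rpow_intCast, Int.cast_add, Int.cast_one] at hlt

lemma pairwise_disjoint_shell : Pairwise (Function.onFun Disjoint shell) := by
  refine (pairwise_disjoint_on shell).2 fun i j hij => ?_
  refine Set.disjoint_left.2 fun x hi hj => ?_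
  have : (2 : ℝ) ^ ((i : ℝ) + 1) ≤ 2 ^ (j : ℝ) :=
    Real.rpow_le_rpow_of_exponent_le one_le_two (by exact_mod_cast hij)
  linarith [hi.2, hj.1]

/-- Pairs of times whose distance has dyadic size `2^j`. -/
def shellPairs (j : ℤ) : Set (ℝ × ℝ) := {z | z.1 - z.2 ∈ shell j}

lemma measurableSet_shellPairs (j : ℤ) : MeasurableSet (shellPairs j) :=
  (measurable_fst.sub measurable_snd) (measurableSet_shell j)

lemma pairwise_disjoint_shellPairs : Pairwise (Function.onFun Disjoint shellPairs) :=
  fun _ _ hij => (pairwise_disjoint_shell hij).preimage _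

lemma ae_mem_iUnion_shellPairs : (⋃ j, shellPairs j) =ᵐ[volume] Set.univ := by
  refine (ae_eq_univ (s := ⋃ j, shellPairs j)).2
    (measure_mono_null (t := {z | z.1 - z.2 = 0}) ?_ ?_)
  · intro z hz
    by_contra hne
    obtain ⟨j, hj⟩ := exists_mem_shell hne
    exact hz (Set.mem_iUnion.2 ⟨j, hj⟩)
  · rw [Measure.volume_eq_prod,
      Measure.measure_prod_null (measurableSet_eq_fun (by fun_prop) (by fun_prop))]
    exact .of_forall fun s => measure_mono_null (t := {s})
      (fun t (ht : s - t = 0) => (sub_eq_zero.1 ht).symm) (measure_singleton s)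

lemma volume_fst_shellPairs_le (j : ℤ) (t : ℝ) :
    volume {s | s - t ∈ shell j} ≤ 4 * 2 ^ (j : ℝ) :=
  ((measurePreserving_sub_right volume t).measure_preimage
    (measurableSet_shell j).nullMeasurableSet).trans_le (volume_shell_le j)

lemma volume_snd_shellPairs_le (j : ℤ) (s : ℝ) :
    volume {t | s - t ∈ shell j} ≤ 4 * 2 ^ (j : ℝ) := by
  have : {t | s - t ∈ shell j} = {t | t - s ∈ shell j} := by
    ext t; simp only [Set.mem_ofPred_eq, ← neg_mem_shell (x := s - t), neg_sub]
  exact this ▸ volume_fst_shellPairs_le j s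

lemma setLIntegral_shellPairs_mul_le (j : ℤ) {f g : ℝ → ℝ≥0∞} (hf : Measurable f)
    (hg : Measurable g) :
    ∫⁻ z in shellPairs j, f z.1 * g z.2
      ≤ 4 * 2 ^ (j : ℝ) * ((∫⁻ s, f s ^ 2) ^ (1 / 2 : ℝ) * (∫⁻ t, g t ^ 2) ^ (1 / 2 : ℝ)) := by
  have hS := measurableSet_shellPairs j
  have hone : Measurable ((shellPairs j).indicator (1 : ℝ × ℝ → ℝ≥0∞)) :=
    measurable_one.indicator hS
  refine le_of_eq_of_le ?_ (lintegral_lintegral_mul_le_of_schur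
    (K := (shellPairs j).indicator 1) hone (fun s => ?_) (fun t => ?_) hf hg)
  · rw [← lintegral_prod (fun z : ℝ × ℝ => f z.1 * g z.2 * (shellPairs j).indicator 1 z)
      (by fun_prop), ← lintegral_indicator hS]
    exact lintegral_congr fun z => by by_cases hz : z ∈ shellPairs j <;> simp [hz]
  · exact (lintegral_indicator_one (hS.preimage measurable_prodMk_left)).trans_le
      (volume_snd_shellPairs_le j s)
  · exact (lintegral_indicator_one (hS.preimage measurable_prodMk_right)).trans_le
      (volume_fst_shellPairs_le j t)

section Shells

variable {V : Type*} [NormedAddCommGroup V] [InnerProductSpace ℂ V]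

/-- The part of the pairing `⟪∫ p, ∫ g⟫` carried by pairs of times at distance about `2^j`. -/
noncomputable def shellForm (j : ℤ) (p g : ℝ → V) : ℂ :=
  ∫ z in shellPairs j, inner ℂ (p z.1) (g z.2)

lemma swap_preimage_shellPairs (j : ℤ) : Prod.swap ⁻¹' shellPairs j = shellPairs j := by
  ext z
  change z.2 - z.1 ∈ shell j ↔ z.1 - z.2 ∈ shell j
  rw [← neg_mem_shell, neg_sub]

lemma enorm_shellForm_symm (j : ℤ) (p g : ℝ → V) : ‖shellForm j p g‖ₑ = ‖shellForm j g p‖ₑ := by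
  have hswap := (Measure.measurePreserving_swap (μ := (volume : Measure ℝ))
    (ν := (volume : Measure ℝ))).setIntegral_preimage_emb
    MeasurableEquiv.prodComm.measurableEmbedding (fun z => inner ℂ (p z.1) (g z.2)) (shellPairs j)
  rw [swap_preimage_shellPairs, ← Measure.volume_eq_prod] at hswap
  have hconj : shellForm j p g = (starRingEnd ℂ) (shellForm j g p) := by
    simp only [shellForm, ← hswap, ← integral_conj, Prod.fst_swap, Prod.snd_swap, inner_conj_symm]
  rw [hconj, ← ofReal_norm, ← ofReal_norm, RCLike.norm_conj]

lemma enorm_shellForm_le_of_decay {a : ℝ} (ha : 0 ≤ a) (j : ℤ) {p g : ℝ → V} {f h : ℝ → ℝ≥0∞}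
    (hf : Measurable f) (hh : Measurable h)
    (hdecay : ∀ s t, s ≠ t → ‖inner ℂ (p s) (g t)‖ₑ ≤ f s * h t * rieszKernel a (s - t)) :
    ‖shellForm j p g‖ₑ ≤ 2 ^ (-(j * a)) * (4 * 2 ^ (j : ℝ) *
      ((∫⁻ s, f s ^ 2) ^ (1 / 2 : ℝ) * (∫⁻ t, h t ^ 2) ^ (1 / 2 : ℝ))) :=
  calc ‖shellForm j p g‖ₑ
      ≤ ∫⁻ z in shellPairs j, 2 ^ (-(j * a)) * (f z.1 * h z.2) := by
        refine (enorm_integral_le_lintegral_enorm _).trans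
          (setLIntegral_mono (by fun_prop) fun z hz => ?_)
        have hne : z.1 ≠ z.2 := fun heq => zero_notMem_shell j (sub_eq_zero.2 heq ▸ hz)
        refine (hdecay _ _ hne).trans ?_
        rw [mul_comm]
        gcongr
        exact rieszKernel_le_of_mem_shell ha hz
    _ ≤ _ := by
        rw [lintegral_const_mul _ (by fun_prop)]
        gcongr
        exact setLIntegral_shellPairs_mul_le j hf hh

lemma integrable_inner_prod {p g : ℝ → V} (hp : Integrable p) (hg : Integrable g) :
    Integrable (fun z : ℝ × ℝ => inner ℂ (p z.1) (g z.2)) := by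
  refine (hp.norm.mul_prod hg.norm).mono' (hp.1.comp_fst.inner hg.1.comp_snd) ?_
  exact .of_forall fun z => norm_inner_le_norm _ _

variable [CompleteSpace V]

lemma inner_integral_integral {p g : ℝ → V} (hp : Integrable p) (hg : Integrable g) :
    inner ℂ (∫ s, p s) (∫ t, g t) = ∫ z : ℝ × ℝ, inner ℂ (p z.1) (g z.2) := by
  rw [Measure.volume_eq_prod, integral_prod_symm _ (integrable_inner_prod hp hg),
    ← integral_inner hg]
  refine integral_congr_ae (.of_forall fun t => ?_)
  simp only
  rw [← inner_conj_symm, ← integral_inner hp, ← integral_conj]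
  simp only [inner_conj_symm]

lemma enorm_inner_integral_le_tsum_shellForm {p g : ℝ → V} (hp : Integrable p)
    (hg : Integrable g) :
    ‖inner ℂ (∫ s, p s) (∫ t, g t)‖ₑ ≤ ∑' j : ℤ, ‖shellForm j p g‖ₑ := by
  have hsum := hasSum_integral_iUnion (fun j => measurableSet_shellPairs j)
    pairwise_disjoint_shellPairs (integrable_inner_prod hp hg).integrableOn
  rw [setIntegral_congr_set ae_mem_iUnion_shellPairs, setIntegral_univ] at hsum
  rw [inner_integral_integral hp hg, ← hsum.tsum_eq]
  exact enorm_tsum_le_tsum_enorm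

lemma shellForm_eq_integral_inner (j : ℤ) {p g : ℝ → V} (hp : Integrable p)
    (hg : Integrable g) :
    shellForm j p g = ∫ t, inner ℂ (∫ s in {s | s - t ∈ shell j}, p s) (g t) := by
  rw [shellForm, ← integral_indicator (measurableSet_shellPairs j), Measure.volume_eq_prod,
    integral_prod_symm _ ((integrable_inner_prod hp hg).indicator (measurableSet_shellPairs j))]
  refine integral_congr_ae (.of_forall fun t => ?_)
  simp only
  rw [← inner_conj_symm, ← integral_inner hp.integrableOn, ← integral_conj,
    ← integral_indicator (measurableSet_sub_mem_shell j t)]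
  exact integral_congr_ae (.of_forall fun s => by
    by_cases hs : s - t ∈ shell j <;> simp [Set.indicator, shellPairs, hs])

lemma measurable_indicator_shell (j : ℤ) {f : ℝ → ℝ≥0∞} (hf : Measurable f) :
    Measurable fun z : ℝ × ℝ => {s | s - z.1 ∈ shell j}.indicator f z.2 :=
  ((hf.comp measurable_fst).indicator (measurableSet_shellPairs j)).comp measurable_swap

lemma measurable_setLIntegral_shell (j : ℤ) {f : ℝ → ℝ≥0∞} (hf : Measurable f) :
    Measurable fun t => ∫⁻ s in {s | s - t ∈ shell j}, f s := by
  simp only [← lintegral_indicator (measurableSet_sub_mem_shell j _)]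
  exact (measurable_indicator_shell j hf).lintegral_prod_right'

lemma lintegral_setLIntegral_shell_le (j : ℤ) {f : ℝ → ℝ≥0∞} (hf : Measurable f) :
    ∫⁻ t, ∫⁻ s in {s | s - t ∈ shell j}, f s ≤ 4 * 2 ^ (j : ℝ) * ∫⁻ s, f s := by
  have hind (s t : ℝ) : {s | s - t ∈ shell j}.indicator f s
      = f s * {t | s - t ∈ shell j}.indicator 1 t := by
    by_cases hs : s - t ∈ shell j <;> simp [Set.indicator, hs]
  simp only [← lintegral_indicator (measurableSet_sub_mem_shell j _)]
  rw [lintegral_lintegral_swap (measurable_indicator_shell j hf).aemeasurable,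
    ← lintegral_const_mul _ hf]
  refine lintegral_mono fun s => ?_
  have hI : MeasurableSet {t | s - t ∈ shell j} :=
    (measurable_const.sub measurable_id) (measurableSet_shell j)
  simp only [hind]
  rw [lintegral_const_mul _ (measurable_one.indicator hI), lintegral_indicator_one hI, mul_comm]
  gcongr
  exact volume_snd_shellPairs_le j s

lemma enorm_integral_shell_sq_le (j : ℤ) {p : ℝ → V} (hp : Integrable p) {f : ℝ → ℝ≥0∞}
    (hf : Measurable f)
    (hdecay : ∀ s t, s ≠ t → ‖inner ℂ (p s) (p t)‖ₑ ≤ f s * f t * rieszKernel (1 / 2) (s - t))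
    (t : ℝ) :
    ‖∫ s in {s | s - t ∈ shell j}, p s‖ₑ ^ 2
      ≤ 8 * 2 ^ (j / 2 : ℝ) * ∫⁻ s in {s | s - t ∈ shell j}, f s ^ 2 := by
  have hdiam : ∀ s ∈ {s | s - t ∈ shell j}, ∀ s' ∈ {s | s - t ∈ shell j},
      |s - s'| ≤ 2 ^ ((j : ℝ) + 2) := fun s hs s' hs' => by
    have hsplit := abs_sub (s - t) (s' - t)
    have hdouble : (2 : ℝ) ^ ((j : ℝ) + 2) = 2 ^ ((j : ℝ) + 1) + 2 ^ ((j : ℝ) + 1) := by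
      rw [show (j : ℝ) + 2 = j + 1 + 1 by ring, Real.rpow_add_one two_ne_zero (_ + 1)]; ring
    rw [sub_sub_sub_cancel_right] at hsplit
    linarith [hs.2, hs'.2]
  have hmass : ENNReal.ofReal (2 / (1 - 1 / 2) * ((2 : ℝ) ^ ((j : ℝ) + 2)) ^ (1 - 1 / 2 : ℝ))
      = 8 * 2 ^ (j / 2 : ℝ) := by
    rw [← Real.rpow_mul two_pos.le, show ((j : ℝ) + 2) * (1 - 1 / 2) = j / 2 + 1 by ring,
      Real.rpow_add_one two_ne_zero, show 2 / (1 - 1 / 2) * ((2 : ℝ) ^ (j / 2 : ℝ) * 2)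
        = 8 * 2 ^ (j / 2 : ℝ) by ring, ENNReal.ofReal_mul (by norm_num), ofReal_two_rpow,
      ENNReal.ofReal_ofNat]
  rw [← hmass]
  exact enorm_setIntegral_sq_le_of_decay (by norm_num) (by positivity)
    (measurableSet_sub_mem_shell j t) hdiam hp.integrableOn hf hdecay

lemma exists_majorant_integral_shell (j : ℤ) {p : ℝ → V} (hp : Integrable p) {f : ℝ → ℝ≥0∞}
    (hf : Measurable f)
    (hdecay : ∀ s t, s ≠ t → ‖inner ℂ (p s) (p t)‖ₑ ≤ f s * f t * rieszKernel (1 / 2) (s - t)) :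
    ∃ P : ℝ → ℝ≥0∞, Measurable P ∧ (∀ t, ‖∫ s in {s | s - t ∈ shell j}, p s‖ₑ ≤ P t) ∧
      ∫⁻ t, P t ^ 2 ≤ (6 * 2 ^ (3 * j / 4 : ℝ)) ^ 2 * ∫⁻ s, f s ^ 2 := by
  refine ⟨fun t => (8 * 2 ^ (j / 2 : ℝ) * ∫⁻ s in {s | s - t ∈ shell j}, f s ^ 2) ^ (1 / 2 : ℝ),
    ((measurable_setLIntegral_shell j (hf.pow_const 2)).const_mul _).pow_const _,
    fun t => ?_, ?_⟩
  · rw [one_div, ENNReal.le_rpow_inv_iff two_pos, ENNReal.rpow_two]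
    exact enorm_integral_shell_sq_le j hp hf hdecay t
  · calc _ = ∫⁻ t, 8 * 2 ^ (j / 2 : ℝ) * ∫⁻ s in {s | s - t ∈ shell j}, f s ^ 2 :=
          lintegral_congr fun t => (sq _).trans (rpow_half_mul_rpow_half _)
      _ = 8 * 2 ^ (j / 2 : ℝ) * ∫⁻ t, ∫⁻ s in {s | s - t ∈ shell j}, f s ^ 2 :=
          lintegral_const_mul' _ _ (ENNReal.mul_ne_top (by simp) (two_rpow_ne_top _))
      _ ≤ 8 * 2 ^ (j / 2 : ℝ) * (4 * 2 ^ (j : ℝ) * ∫⁻ s, f s ^ 2) := by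
          gcongr
          exact lintegral_setLIntegral_shell_le j (hf.pow_const 2)
      _ = 32 * (2 ^ (3 * j / 4 : ℝ)) ^ 2 * ∫⁻ s, f s ^ 2 := by
          rw [sq, ← two_rpow_add, show (3 * j / 4 + 3 * j / 4 : ℝ) = j / 2 + j by ring,
            two_rpow_add]
          ring
      _ ≤ (6 * 2 ^ (3 * j / 4 : ℝ)) ^ 2 * ∫⁻ s, f s ^ 2 := by
          rw [mul_pow]; gcongr; norm_num

/-- The mixed bound of Keel and Tao: dispersion in one argument, energy in the other. -/
lemma enorm_shellForm_le_mixed (j : ℤ) {p g : ℝ → V} (hp : Integrable p) (hg : Integrable g)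
    {f h : ℝ → ℝ≥0∞} (hf : Measurable f) (hh : Measurable h)
    (hdecay : ∀ s t, s ≠ t → ‖inner ℂ (p s) (p t)‖ₑ ≤ f s * f t * rieszKernel (1 / 2) (s - t))
    (hgh : ∀ t, ‖g t‖ₑ ≤ h t) :
    ‖shellForm j p g‖ₑ ≤ 6 * 2 ^ (3 * j / 4 : ℝ) *
      ((∫⁻ s, f s ^ 2) ^ (1 / 2 : ℝ) * (∫⁻ t, h t ^ 2) ^ (1 / 2 : ℝ)) := by
  obtain ⟨P, hPm, hpP, hPsq⟩ := exists_majorant_integral_shell j hp hf hdecay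
  rw [shellForm_eq_integral_inner j hp hg]
  calc ‖∫ t, inner ℂ (∫ s in {s | s - t ∈ shell j}, p s) (g t)‖ₑ ≤ ∫⁻ t, P t * h t :=
        (enorm_integral_le_lintegral_enorm _).trans (lintegral_mono fun t =>
          (enorm_inner_le_enorm_mul_enorm _ _).trans (mul_le_mul' (hpP t) (hgh t)))
    _ ≤ (∫⁻ t, P t ^ 2) ^ (1 / 2 : ℝ) * (∫⁻ t, h t ^ 2) ^ (1 / 2 : ℝ) :=
        lintegral_mul_le_sqrt_mul_sqrt hPm hh
    _ ≤ ((6 * 2 ^ (3 * j / 4 : ℝ)) ^ 2 * ∫⁻ s, f s ^ 2) ^ (1 / 2 : ℝ)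
          * (∫⁻ t, h t ^ 2) ^ (1 / 2 : ℝ) := by gcongr
    _ = _ := by
        rw [ENNReal.mul_rpow_of_nonneg _ _ (by norm_num), ← ENNReal.rpow_natCast,
          ← ENNReal.rpow_mul, mul_assoc]
        norm_num

end Shells

section Atomic

variable {V : Type*} [NormedAddCommGroup V] [InnerProductSpace ℂ V]

/-- Curves `p k`, `k ∈ ℤ`, in a Hilbert space whose size (`energy`) and pairings at distinct times
(`dispersion`) are governed by opposite powers of `2^k` and by amplitudes `c k`. It abstracts the
dyadic layers of a space-time function, `2^k` being a time scale. -/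
structure IsAtomicFamily (σ α β : ℝ) (c : ℤ → ℝ → ℝ≥0∞) (p : ℤ → ℝ → V) : Prop where
  measurable : ∀ k, Measurable (c k)
  integrable : ∀ k, Integrable (p k)
  energy : ∀ k t, ‖p k t‖ₑ ≤ 2 ^ (-(k * β)) * c k t
  dispersion : ∀ k l s t, s ≠ t →
    ‖inner ℂ (p k s) (p l t)‖ₑ ≤ 2 ^ ((k + l) * α) * (c k s * c l t * rieszKernel σ (s - t))

lemma lintegral_const_mul_sq_sqrt (a : ℝ≥0∞) {f : ℝ → ℝ≥0∞} (hf : Measurable f) :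
    (∫⁻ t, (a * f t) ^ 2) ^ (1 / 2 : ℝ) = a * (∫⁻ t, f t ^ 2) ^ (1 / 2 : ℝ) := by
  simp only [mul_pow]
  rw [lintegral_const_mul _ (hf.pow_const 2), ENNReal.mul_rpow_of_nonneg _ _ (by norm_num),
    ← ENNReal.rpow_natCast, ← ENNReal.rpow_mul]
  norm_num

lemma rieszKernel_eq_two_rpow {x : ℝ} (hx : x ≠ 0) (a : ℝ) :
    rieszKernel a x = 2 ^ (-(a * Real.logb 2 |x|)) := by
  conv_lhs => rw [rieszKernel, ← Real.rpow_logb two_pos (by norm_num) (abs_pos.2 hx)]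
  rw [ofReal_two_rpow, ← ENNReal.rpow_mul, mul_neg, mul_comm]

namespace IsAtomicFamily

variable {σ α β : ℝ} {c : ℤ → ℝ → ℝ≥0∞} {p : ℤ → ℝ → V}

lemma enorm_inner_le_energy (h : IsAtomicFamily σ α β c p) (k l : ℤ) (s t : ℝ) :
    ‖inner ℂ (p k s) (p l t)‖ₑ ≤ 2 ^ (-((k + l) * β)) * (c k s * c l t) := by
  refine (enorm_inner_le_enorm_mul_enorm _ _).trans
    ((mul_le_mul' (h.energy k s) (h.energy l t)).trans_eq ?_)
  rw [show -((k + l) * β) = -(k * β) + -(l * β) by ring, two_rpow_add]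
  ring

/-- The better of the energy and the dispersive bound. -/
lemma enorm_inner_le_min (h : IsAtomicFamily σ α β c p) (hσ : α + β = σ / 2) (k l : ℤ) {s t : ℝ}
    (hst : s ≠ t) :
    ‖inner ℂ (p k s) (p l t)‖ₑ ≤ rieszKernel (2 * β) (s - t) *
      (c k s * c l t * 2 ^ (-min α β * |(l : ℝ) - (2 * Real.logb 2 |s - t| - k)|)) := by
  have hR := rieszKernel_eq_two_rpow (sub_ne_zero.2 hst)
  have henergy := h.enorm_inner_le_energy k l s t
  have hdisp := h.dispersion k l s t hst
  rw [hR] at hdisp ⊢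
  generalize Real.logb 2 |s - t| = x at *
  obtain rfl : σ = 2 * α + 2 * β := by linarith
  have hcombine (e : ℝ) (he : e ≤ -(2 * β * x) + -min α β * |(l : ℝ) - (2 * x - k)|) :
      2 ^ e * (c k s * c l t) ≤ 2 ^ (-(2 * β * x)) *
        (c k s * c l t * 2 ^ (-min α β * |(l : ℝ) - (2 * x - k)|)) := by
    rw [mul_left_comm (2 ^ _) (c k s * c l t), ← two_rpow_add, mul_comm]
    gcongr c k s * c l t * ?_
    exact two_rpow_mono he
  rcases le_total 0 ((l : ℝ) - (2 * x - k)) with hN | hN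
  · refine henergy.trans (hcombine _ ?_)
    rw [abs_of_nonneg hN]
    nlinarith [min_le_right α β]
  · refine (hdisp.trans_eq ?_).trans (hcombine ((k + l) * α + -((2 * α + 2 * β) * x)) ?_)
    · rw [two_rpow_add]; ring
    · rw [abs_of_nonpos hN]
      nlinarith [min_le_left α β]

lemma enorm_inner_sum_le (h : IsAtomicFamily σ α β c p) (hα : 0 < α) (hβ : 0 < β)
    (hσ : α + β = σ / 2) (S : Finset ℤ) {φ : ℝ → ℝ≥0∞} (hcφ : ∀ t, ∑' k, c k t ^ 2 ≤ φ t ^ 2)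
    {s t : ℝ} (hst : s ≠ t) :
    ‖inner ℂ (∑ k ∈ S, p k s) (∑ k ∈ S, p k t)‖ₑ
      ≤ 2 ^ min α β * geomSum (min α β) * (φ s * φ t * rieszKernel (2 * β) (s - t)) := by
  set γ := min α β
  set K : ℤ → ℤ → ℝ≥0∞ := fun k l => 2 ^ (-γ * |(l : ℝ) - (2 * Real.logb 2 |s - t| - k)|)
  have hγ : 0 < γ := lt_min hα hβ
  have hrow (k : ℤ) : ∑' l, K k l ≤ 2 ^ γ * geomSum γ := tsum_two_rpow_abs_sub_le hγ _
  have hK (k l : ℤ) : K k l = K l k := by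
    simp only [K]; congr 3; ring
  have hφ (t : ℝ) : (∑' k, c k t ^ 2) ^ (1 / 2 : ℝ) ≤ φ t := by
    rw [one_div, ENNReal.rpow_inv_le_iff two_pos, ENNReal.rpow_two]
    exact hcφ t
  calc ‖inner ℂ (∑ k ∈ S, p k s) (∑ l ∈ S, p l t)‖ₑ
      ≤ ∑ k ∈ S, ∑ l ∈ S, rieszKernel (2 * β) (s - t) * (c k s * c l t * K k l) := by
        rw [sum_inner]
        simp only [inner_sum]
        exact (enorm_sum_le _ _).trans (Finset.sum_le_sum fun k _ => (enorm_sum_le _ _).trans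
          (Finset.sum_le_sum fun l _ => h.enorm_inner_le_min hσ k l hst))
    _ ≤ rieszKernel (2 * β) (s - t) * ∑' k, ∑' l, c k s * c l t * K k l := by
        simp only [← Finset.mul_sum]
        gcongr
        exact (Finset.sum_le_sum fun k _ => ENNReal.sum_le_tsum S).trans (ENNReal.sum_le_tsum S)
    _ ≤ rieszKernel (2 * β) (s - t) * (2 ^ γ * geomSum γ * (φ s * φ t)) := by
        gcongr
        refine (tsum_tsum_mul_le_of_schur hrow (fun l => ?_) _ _).trans ?_
        · simpa only [hK l] using hrow l
        · gcongr
          exacts [hφ s, hφ t]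
    _ = 2 ^ γ * geomSum γ * (φ s * φ t * rieszKernel (2 * β) (s - t)) := by ring

theorem enorm_sum_integral_sq_le [CompleteSpace V] (h : IsAtomicFamily σ α β c p) {m : ℝ}
    (hm1 : 1 < m) (hm2 : m < 2) (hα : 0 < α) (hβ : β = 1 - 1 / m) (hσ : α + β = σ / 2)
    (S : Finset ℤ) {φ : ℝ → ℝ≥0∞} (hφ : Measurable φ) (hcφ : ∀ t, ∑' k, c k t ^ 2 ≤ φ t ^ 2) :
    ‖∑ k ∈ S, ∫ t, p k t‖ₑ ^ 2
      ≤ 2 ^ min α β * geomSum (min α β) * (2 * hlsConst m * (∫⁻ t, φ t ^ m) ^ (2 / m)) := by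
  have hβ0 : 0 < β := by rw [hβ, sub_pos, div_lt_one (by linarith)]; exact hm1
  rw [← integral_finsetSum S fun k _ => h.integrable k]
  refine enorm_integral_sq_le_of_decay hm1 hm2 (integrable_finsetSum S fun k _ => h.integrable k) hφ
    fun s t hst => (h.enorm_inner_sum_le hα hβ0 hσ S hcφ hst).trans_eq ?_
  rw [hβ, show 2 * (1 - 1 / m) = 2 - 2 / m by ring]

section Endpoint

/-- Interpolation with parameter `1/(2σ)`, which turns the dispersive singularity `|s - t|^{-σ}`
into `|s - t|^{-1/2}`. -/
lemma enorm_inner_le_interpolated {σ : ℝ} {c : ℤ → ℝ → ℝ≥0∞} {p : ℤ → ℝ → V}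
    (h : IsAtomicFamily σ ((σ - 1) / 2) (1 / 2) c p) (hσ : 1 ≤ σ) (k : ℤ) {s t : ℝ} (hst : s ≠ t) :
    ‖inner ℂ (p k s) (p k t)‖ₑ
      ≤ 2 ^ (-(k / 4) : ℝ) * c k s * (2 ^ (-(k / 4) : ℝ) * c k t) *
        rieszKernel (1 / 2) (s - t) := by
  set θ := 1 / (2 * σ)
  have hθ0 : 0 ≤ θ := by positivity
  have hθ1 : 0 ≤ 1 - θ := by rw [sub_nonneg, div_le_one (by linarith)]; linarith
  have hθσ : σ * θ = 1 / 2 := by simp only [θ]; field_simp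
  set x := c k s * c k t
  calc ‖inner ℂ (p k s) (p k t)‖ₑ
      = ‖inner ℂ (p k s) (p k t)‖ₑ ^ (1 - θ) * ‖inner ℂ (p k s) (p k t)‖ₑ ^ θ := by
        rw [← ENNReal.rpow_add_of_nonneg _ _ hθ1 hθ0, sub_add_cancel, ENNReal.rpow_one]
    _ ≤ (2 ^ (-((k + k) * (1 / 2)) : ℝ) * x) ^ (1 - θ)
          * (2 ^ ((k + k) * ((σ - 1) / 2) : ℝ) * (x * rieszKernel σ (s - t))) ^ θ := by
        gcongr
        · exact h.enorm_inner_le_energy k k s t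
        · exact h.dispersion k k s t hst
    _ = 2 ^ (-((k + k) * (1 / 2)) * (1 - θ) + (k + k) * ((σ - 1) / 2) * θ)
          * (x ^ (1 - θ) * x ^ θ) * rieszKernel (σ * θ) (s - t) := by
        simp only [ENNReal.mul_rpow_of_nonneg _ _ hθ1, ENNReal.mul_rpow_of_nonneg _ _ hθ0,
          ← ENNReal.rpow_mul, rieszKernel_rpow, two_rpow_add]
        ring
    _ = 2 ^ (-(k / 4) + -(k / 4) : ℝ) * x * rieszKernel (1 / 2) (s - t) := by
        rw [← ENNReal.rpow_add_of_nonneg _ _ hθ1 hθ0, sub_add_cancel, ENNReal.rpow_one, hθσ]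
        congr 3
        linear_combination (k : ℝ) * hθσ
    _ = _ := by rw [two_rpow_add]; ring

/-- The three exponents are those of the dispersive bound and of the two mixed bounds. -/
lemma keelTao_exponents {σ : ℝ} (hσ : 1 < σ) (X Y : ℝ) :
    (X + Y) * ((σ - 1) / 2) ≤ -(min 1 (σ - 1) / 14) * (|X| + |Y|) ∨
      -(X / 4) - Y / 2 ≤ -(min 1 (σ - 1) / 14) * (|X| + |Y|) ∨
      -(X / 2) - Y / 4 ≤ -(min 1 (σ - 1) / 14) * (|X| + |Y|) := by
  have hS : 0 ≤ |X| + |Y| := by positivity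
  have hmin : min 1 (σ - 1) ≤ 1 := min_le_left _ _
  rcases le_total (X + Y) (-(|X| + |Y|) / 7) with hneg | hpos
  · left
    nlinarith [min_le_right 1 (σ - 1)]
  · have hmix : -(X / 4) - Y / 2 ≤ -(|X| + |Y|) / 14 ∨ -(X / 2) - Y / 4 ≤ -(|X| + |Y|) / 14 := by
      rcases abs_cases X with ⟨hX, _⟩ | ⟨hX, _⟩ <;> rcases abs_cases Y with ⟨hY, _⟩ | ⟨hY, _⟩ <;>
        rw [hX, hY] at hpos ⊢ <;>
        first
          | exact .inl (by linarith)
          | exact .inr (by linarith)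
    exact .inr (hmix.imp (fun h => by nlinarith) fun h => by nlinarith)

variable [CompleteSpace V] {σ : ℝ} {c : ℤ → ℝ → ℝ≥0∞} {p : ℤ → ℝ → V}

lemma enorm_shellForm_le_mixed (h : IsAtomicFamily σ ((σ - 1) / 2) (1 / 2) c p) (hσ : 1 < σ)
    (j k l : ℤ) :
    ‖shellForm j (p k) (p l)‖ₑ ≤ 6 * 2 ^ (-((k - j : ℝ) / 4) - (l - j) / 2) *
      ((∫⁻ t, c k t ^ 2) ^ (1 / 2 : ℝ) * (∫⁻ t, c l t ^ 2) ^ (1 / 2 : ℝ)) := by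
  refine (_root_.enorm_shellForm_le_mixed j (h.integrable k) (h.integrable l)
    ((h.measurable k).const_mul _) ((h.measurable l).const_mul _)
    (fun s t => h.enorm_inner_le_interpolated hσ.le k) (h.energy l)).trans_eq ?_
  rw [lintegral_const_mul_sq_sqrt _ (h.measurable k),
    lintegral_const_mul_sq_sqrt _ (h.measurable l),
    show -((k - j : ℝ) / 4) - (l - j) / 2
      = 3 * j / 4 + -(k / 4) + -(l * (1 / 2)) by ring, two_rpow_add, two_rpow_add]
  ring

lemma enorm_shellForm_le (h : IsAtomicFamily σ ((σ - 1) / 2) (1 / 2) c p) (hσ : 1 < σ)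
    (j k l : ℤ) :
    ‖shellForm j (p k) (p l)‖ₑ ≤
      6 * 2 ^ (-(min 1 (σ - 1) / 14) * (|(k : ℝ) - j| + |(l : ℝ) - j|)) *
        ((∫⁻ t, c k t ^ 2) ^ (1 / 2 : ℝ) * (∫⁻ t, c l t ^ 2) ^ (1 / 2 : ℝ)) := by
  rcases keelTao_exponents hσ (k - j) (l - j) with hexp | hexp | hexp
  · have hdisp := enorm_shellForm_le_of_decay (show 0 ≤ σ by linarith) j
      (f := fun t => 2 ^ ((k + l) * ((σ - 1) / 2) : ℝ) * c k t) ((h.measurable k).const_mul _)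
      (h.measurable l) fun s t hst => (h.dispersion k l s t hst).trans_eq (by ring)
    rw [lintegral_const_mul_sq_sqrt _ (h.measurable k)] at hdisp
    generalize (∫⁻ t, c k t ^ 2) ^ (1 / 2 : ℝ) = C at hdisp ⊢
    generalize (∫⁻ t, c l t ^ 2) ^ (1 / 2 : ℝ) = D at hdisp ⊢
    calc ‖shellForm j (p k) (p l)‖ₑ
        ≤ 4 * 2 ^ (((k : ℝ) - j + (l - j)) * ((σ - 1) / 2)) * (C * D) := by
          refine hdisp.trans_eq ?_
          rw [show ((k : ℝ) - j + (l - j)) * ((σ - 1) / 2)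
            = -(j * σ) + j + (k + l) * ((σ - 1) / 2) by ring, two_rpow_add, two_rpow_add]
          ring
      _ ≤ _ := mul_le_mul_left (mul_le_mul' (by norm_num) (two_rpow_mono hexp)) _
  · refine (h.enorm_shellForm_le_mixed hσ j k l).trans ?_
    gcongr 6 * ?_ * _
    exact two_rpow_mono hexp
  · rw [enorm_shellForm_symm, mul_comm ((∫⁻ t, c k t ^ 2) ^ (1 / 2 : ℝ))]
    refine (h.enorm_shellForm_le_mixed hσ j l k).trans ?_
    gcongr 6 * ?_ * _
    exact two_rpow_mono (hexp.trans' (by linarith))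

theorem enorm_sum_integral_sq_le_endpoint (h : IsAtomicFamily σ ((σ - 1) / 2) (1 / 2) c p)
    (hσ : 1 < σ) (S : Finset ℤ) :
    ‖∑ k ∈ S, ∫ t, p k t‖ₑ ^ 2
      ≤ 6 * geomSum (min 1 (σ - 1) / 14) ^ 2 * ∫⁻ t, ∑' k, c k t ^ 2 := by
  set γ := min 1 (σ - 1) / 14
  have hgeom (j : ℤ) : ∑' k : ℤ, (2 : ℝ≥0∞) ^ (-γ * |(k : ℝ) - j|) = geomSum γ := by
    simpa [geomSum] using (Equiv.subRight j).tsum_eq fun n : ℤ => (2 : ℝ≥0∞) ^ (-γ * |(n : ℝ)|)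
  set C : ℤ → ℝ≥0∞ := fun k => (∫⁻ t, c k t ^ 2) ^ (1 / 2 : ℝ)
  set K : ℤ → ℤ → ℝ≥0∞ := fun k l => ∑' j : ℤ, 6 * 2 ^ (-γ * (|(k : ℝ) - j| + |(l : ℝ) - j|))
  have hrow (k : ℤ) : ∑' l, K k l ≤ 6 * geomSum γ ^ 2 := by
    rw [ENNReal.tsum_comm]
    simp only [mul_add, two_rpow_add, ENNReal.tsum_mul_left, hgeom, ENNReal.tsum_mul_right,
      abs_sub_comm (k : ℝ)]
    rw [sq]
  have hK (k l : ℤ) : K k l = K l k := by simp only [K, add_comm]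
  have hC : ∑' k, C k ^ 2 = ∫⁻ t, ∑' k, c k t ^ 2 := by
    rw [lintegral_tsum fun k => ((h.measurable k).pow_const 2).aemeasurable]
    exact tsum_congr fun k => (sq _).trans (rpow_half_mul_rpow_half _)
  calc ‖∑ k ∈ S, ∫ t, p k t‖ₑ ^ 2
      ≤ ∑ k ∈ S, ∑ l ∈ S, ‖inner ℂ (∫ t, p k t) (∫ t, p l t)‖ₑ := by
        rw [enorm_sq_eq_enorm_inner_self, sum_inner]
        simp only [inner_sum]
        exact (enorm_sum_le _ _).trans (Finset.sum_le_sum fun k _ => enorm_sum_le _ _)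
    _ ≤ ∑ k ∈ S, ∑ l ∈ S, C k * C l * K k l := by
        gcongr with k _ l _
        rw [← ENNReal.tsum_mul_left]
        exact (enorm_inner_integral_le_tsum_shellForm (h.integrable k) (h.integrable l)).trans
          (ENNReal.tsum_le_tsum fun j => (h.enorm_shellForm_le hσ j k l).trans_eq (mul_comm _ _))
    _ ≤ ∑' k, ∑' l, C k * C l * K k l :=
        (Finset.sum_le_sum fun k _ => ENNReal.sum_le_tsum S).trans (ENNReal.sum_le_tsum S)
    _ ≤ 6 * geomSum γ ^ 2 * ((∑' k, C k ^ 2) ^ (1 / 2 : ℝ) * (∑' k, C k ^ 2) ^ (1 / 2 : ℝ)) :=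
        tsum_tsum_mul_le_of_schur hrow (fun l => by simpa only [hK l] using hrow l) C C
    _ = 6 * geomSum γ ^ 2 * ∫⁻ t, ∑' k, c k t ^ 2 := by
        rw [rpow_half_mul_rpow_half, hC]

end Endpoint

end IsAtomicFamily

end Atomic

section Layers

variable {X : Type*} {σ p : ℝ} {a : ℝ≥0∞} {f : X → ℝ≥0∞}

/-- The `k`-th layer of `f` relative to the height `a`: where `f / a` lies between
`2^{-σ(k+1)/p}` and `2^{-σk/p}`. If `a = ‖f‖_p`, the measure of the layer is at most
`2^{σ(k+1)}`, so that `2^k` is the time scale matched to it by the decay `|t|^{-σ}`. -/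
def layer (σ p : ℝ) (a : ℝ≥0∞) (f : X → ℝ≥0∞) (k : ℤ) : Set X :=
  {x | 2 ^ (-(σ * (k + 1) / p)) * a < f x ∧ f x ≤ 2 ^ (-(σ * k / p)) * a}

lemma layer_top (σ p : ℝ) (f : X → ℝ≥0∞) (k : ℤ) : layer σ p ∞ f k = ∅ :=
  Set.eq_empty_of_forall_notMem fun x hx => by
    have := hx.1
    rw [ENNReal.mul_top (ENNReal.rpow_pos two_pos ENNReal.ofNat_ne_top).ne'] at this
    exact not_top_lt this

lemma layer_zero (σ p : ℝ) (f : X → ℝ≥0∞) (k : ℤ) : layer σ p 0 f k = ∅ :=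
  Set.eq_empty_of_forall_notMem fun x hx => by
    have := hx.1.trans_le hx.2
    simp at this

lemma pairwise_disjoint_layer (hσ : 0 < σ) (hp : 0 < p) (a : ℝ≥0∞) (f : X → ℝ≥0∞) :
    Pairwise (Function.onFun Disjoint (layer σ p a f)) := by
  refine pairwise_disjoint_on _ |>.2 fun i j hij => Set.disjoint_left.2 fun x hi hj => ?_
  have hij' : (i : ℝ) + 1 ≤ j := by exact_mod_cast hij
  have hlevel : (2 : ℝ≥0∞) ^ (-(σ * j / p)) * a ≤ 2 ^ (-(σ * (i + 1) / p)) * a :=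
    mul_le_mul_left (two_rpow_mono (by gcongr)) _
  exact (hi.1.trans_le (hj.2.trans hlevel)).false

lemma exists_mem_layer (hσ : 0 < σ) (hp : 0 < p) (ha : a ≠ 0) (ha_top : a ≠ ∞) {x : X}
    (hx : f x ≠ 0) (hx_top : f x ≠ ∞) : ∃ k, x ∈ layer σ p a f k := by
  have hratio_top : f x / a ≠ ∞ := ENNReal.div_ne_top hx_top ha
  have hratio : 0 < (f x / a).toReal :=
    ENNReal.toReal_pos (ENNReal.div_ne_zero.2 ⟨hx, ha_top⟩) hratio_top
  obtain ⟨n, hlt, hle⟩ := exists_mem_Ioc_zpow hratio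
    (Real.one_lt_rpow (by norm_num : (1 : ℝ) < 2) (show 0 < σ / p by positivity))
  have hpow (m : ℤ) : ((2 : ℝ) ^ (σ / p)) ^ m = 2 ^ (σ * m / p) := by
    rw [← Real.rpow_intCast, ← Real.rpow_mul (by norm_num)]
    congr 1; ring
  rw [hpow] at hlt hle
  refine ⟨-n - 1, ?_, ?_⟩
  · rw [← ENNReal.lt_div_iff_mul_lt (.inl ha) (.inl ha_top), ← ENNReal.ofReal_toReal hratio_top,
      ← ofReal_two_rpow]
    refine (ENNReal.ofReal_lt_ofReal_iff hratio).2 (lt_of_eq_of_lt ?_ hlt)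
    congr 1; push_cast; ring
  · rw [← ENNReal.div_le_iff ha ha_top, ← ENNReal.ofReal_toReal hratio_top, ← ofReal_two_rpow]
    refine ENNReal.ofReal_le_ofReal (hle.trans_eq ?_)
    congr 1; push_cast; ring

variable [MeasurableSpace X] {μ : Measure X}

lemma measurableSet_layer (hf : Measurable f) (k : ℤ) : MeasurableSet (layer σ p a f k) :=
  (measurableSet_lt measurable_const hf).inter (measurableSet_le hf measurable_const)

/-- The size of the `k`-th layer, normalised so that the squares of the sizes sum to at most `a²`
when `‖f‖_p ≤ a`. -/
noncomputable def layerSize (μ : Measure X) (σ p : ℝ) (a : ℝ≥0∞) (f : X → ℝ≥0∞) (k : ℤ) :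
    ℝ≥0∞ :=
  a ^ (1 - p / 2) * (∫⁻ x in layer σ p a f k, f x ^ p ∂μ) ^ (1 / 2 : ℝ)

lemma layerSize_sq (k : ℤ) :
    layerSize μ σ p a f k ^ 2 = a ^ (2 - p) * ∫⁻ x in layer σ p a f k, f x ^ p ∂μ := by
  rw [layerSize, mul_pow, sq (_ ^ (1 / 2 : ℝ)), rpow_half_mul_rpow_half, ← ENNReal.rpow_natCast,
    ← ENNReal.rpow_mul]
  congr 2; push_cast; ring

lemma tsum_layerSize_sq_le (hσ : 0 < σ) (hp : 0 < p) (hp2 : p < 2) (hf : Measurable f)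
    (hfa : ∫⁻ x, f x ^ p ∂μ ≤ a ^ p) : ∑' k, layerSize μ σ p a f k ^ 2 ≤ a ^ 2 := by
  simp only [layerSize_sq]
  rw [ENNReal.tsum_mul_left, ← lintegral_iUnion (measurableSet_layer hf)
    (pairwise_disjoint_layer hσ hp a f)]
  calc a ^ (2 - p) * ∫⁻ x in ⋃ k, layer σ p a f k, f x ^ p ∂μ ≤ a ^ (2 - p) * a ^ p := by
        gcongr
        exact (setLIntegral_le_lintegral _ _).trans hfa
    _ = a ^ 2 := by
        rw [← ENNReal.rpow_add_of_nonneg _ _ (by linarith) hp.le, ← ENNReal.rpow_natCast]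
        norm_num

/-- `f` is bounded below on a layer, so `‖f‖_p` controls the measure of the layer. -/
lemma setLIntegral_layer_le (hp : 1 < p) (hf : Measurable f) (hfa : ∫⁻ x, f x ^ p ∂μ ≤ a ^ p)
    (k : ℤ) :
    ∫⁻ x in layer σ p a f k, f x ∂μ
      ≤ 2 ^ (k * (σ * (1 - 1 / p))) * (2 ^ (σ * (1 - 1 / p)) * layerSize μ σ p a f k) := by
  rcases eq_or_ne a 0 with rfl | ha
  · simp [layer_zero]
  rcases eq_or_ne a ∞ with rfl | ha_top
  · simp [layer_top]
  have hp0 : p ≠ 0 := by linarith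
  set I := ∫⁻ x in layer σ p a f k, f x ^ p ∂μ with hI
  have hlower : ∫⁻ x in layer σ p a f k, f x ∂μ ≤ (2 ^ (-(σ * (k + 1) / p)) * a) ^ (1 - p) * I := by
    rw [hI, ← lintegral_const_mul _ (by fun_prop)]
    refine setLIntegral_mono (by fun_prop) fun x hx => ?_
    have hx_top : f x ≠ ∞ :=
      (hx.2.trans_lt (ENNReal.mul_lt_top (two_rpow_ne_top _).lt_top ha_top.lt_top)).ne
    calc f x = f x ^ (1 - p) * f x ^ p := by
          rw [← ENNReal.rpow_add _ _ (zero_le.trans_lt hx.1).ne' hx_top]; simp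
      _ ≤ (2 ^ (-(σ * (k + 1) / p)) * a) ^ (1 - p) * f x ^ p :=
          mul_le_mul_left (by
            rw [← neg_sub p, ENNReal.rpow_neg, ENNReal.rpow_neg]
            exact ENNReal.inv_le_inv.2 (ENNReal.rpow_le_rpow hx.1.le (by linarith))) _
  have hsqrt : I ≤ a ^ (p / 2) * I ^ (1 / 2 : ℝ) :=
    calc I = I ^ (1 / 2 : ℝ) * I ^ (1 / 2 : ℝ) := (rpow_half_mul_rpow_half I).symm
      _ ≤ (a ^ p) ^ (1 / 2 : ℝ) * I ^ (1 / 2 : ℝ) := by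
          gcongr
          exact (setLIntegral_le_lintegral _ _).trans hfa
      _ = a ^ (p / 2) * I ^ (1 / 2 : ℝ) := by rw [← ENNReal.rpow_mul, mul_one_div]
  calc ∫⁻ x in layer σ p a f k, f x ∂μ
      ≤ (2 ^ (-(σ * (k + 1) / p)) * a) ^ (1 - p) * (a ^ (p / 2) * I ^ (1 / 2 : ℝ)) :=
        hlower.trans (mul_le_mul_right hsqrt _)
    _ = (2 ^ (-(σ * (k + 1) / p))) ^ (1 - p) * ((a ^ (1 - p) * a ^ (p / 2)) * I ^ (1 / 2 : ℝ)) := by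
        rw [ENNReal.mul_rpow_of_ne_top (two_rpow_ne_top _) ha_top]; ring
    _ = 2 ^ (k * (σ * (1 - 1 / p))) * (2 ^ (σ * (1 - 1 / p)) * layerSize μ σ p a f k) := by
        rw [← ENNReal.rpow_add _ _ ha ha_top, ← ENNReal.rpow_mul, layerSize,
          ← mul_assoc ((2 : ℝ≥0∞) ^ ((k : ℝ) * _)), ← two_rpow_add]
        congr 2
        · field_simp; ring
        · congr 1; ring

/-- `f` is bounded above on a layer. -/
lemma setLIntegral_layer_sq_le (hp : 0 < p) (hp2 : p < 2) (hf : Measurable f) (k : ℤ) :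
    ∫⁻ x in layer σ p a f k, f x ^ 2 ∂μ
      ≤ (2 ^ (-(k * (σ * (1 / p - 1 / 2)))) * layerSize μ σ p a f k) ^ 2 :=
  calc ∫⁻ x in layer σ p a f k, f x ^ 2 ∂μ
      ≤ ∫⁻ x in layer σ p a f k, (2 ^ (-(σ * k / p)) * a) ^ (2 - p) * f x ^ p ∂μ := by
        refine setLIntegral_mono (by fun_prop) fun x hx => ?_
        calc f x ^ 2 = f x ^ (2 - p) * f x ^ p := by
              rw [← ENNReal.rpow_add_of_nonneg _ _ (by linarith) hp.le, ← ENNReal.rpow_two]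
              ring_nf
          _ ≤ (2 ^ (-(σ * k / p)) * a) ^ (2 - p) * f x ^ p :=
              mul_le_mul_left (ENNReal.rpow_le_rpow hx.2 (by linarith)) _
    _ = (2 ^ (-(k * (σ * (1 / p - 1 / 2)))) * layerSize μ σ p a f k) ^ 2 := by
        rw [lintegral_const_mul _ (by fun_prop), mul_pow, layerSize_sq,
          ENNReal.mul_rpow_of_nonneg _ _ (by linarith), mul_assoc, ← ENNReal.rpow_natCast,
          ← ENNReal.rpow_mul, ← ENNReal.rpow_mul]
        congr 2
        push_cast
        field_simp

end Layers

/-! ### Dispersive families of vectors -/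

section Dispersive

variable {V : Type*} [NormedAddCommGroup V] [InnerProductSpace ℂ V]
variable {X : Type*} [MeasurableSpace X] {μ : Measure X} {σ : ℝ} {e : ℝ × X → V}

/-- A bounded measurable family of vectors `e (t, x)` whose Gram kernel satisfies the dispersive
bound `|s - t|^{-σ}` between distinct times, and Schur's condition at each fixed time. It plays the
role of evaluation of a dispersive evolution at the space-time point `(t, x)`. -/
structure IsDispersive (μ : Measure X) (σ : ℝ) (e : ℝ × X → V) : Prop where
  stronglyMeasurable : StronglyMeasurable e
  exists_norm_le : ∃ K : ℝ, ∀ z, ‖e z‖ ≤ K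
  dispersion : ∀ s t x y, s ≠ t → ‖inner ℂ (e (s, x)) (e (t, y))‖ₑ ≤ rieszKernel σ (s - t)
  energy : ∀ t x, ∫⁻ y, ‖inner ℂ (e (t, x)) (e (t, y))‖ₑ ∂μ ≤ 1

lemma enorm_inner_smul_smul (a b : ℂ) (v w : V) :
    ‖inner ℂ (a • v) (b • w)‖ₑ = ‖a‖ₑ * ‖b‖ₑ * ‖inner ℂ v w‖ₑ := by
  rw [inner_smul_left, inner_smul_right, enorm_mul, enorm_mul, RCLike.enorm_conj, mul_assoc]

namespace IsDispersive

lemma restrict (he : IsDispersive μ σ e) (B : Set X) : IsDispersive (μ.restrict B) σ e where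
  __ := he
  energy t x := (setLIntegral_le_lintegral _ _).trans (he.energy t x)

lemma integrable_smul (he : IsDispersive μ σ e) {ν : Measure (ℝ × X)} {F : ℝ × X → ℂ}
    (hF : Integrable F ν) : Integrable (fun z => F z • e z) ν := by
  obtain ⟨K, hK⟩ := he.exists_norm_le
  exact hF.smul_bdd K he.stronglyMeasurable.aestronglyMeasurable (.of_forall hK)

variable [CompleteSpace V]

lemma enorm_inner_integral_le (he : IsDispersive μ σ e) {ν₁ ν₂ : Measure X} {s t : ℝ} (hst : s ≠ t)
    {f g : X → ℂ} (hf : Measurable f) (hg : Measurable g) :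
    ‖inner ℂ (∫ x, f x • e (s, x) ∂ν₁) (∫ y, g y • e (t, y) ∂ν₂)‖ₑ
      ≤ (∫⁻ x, ‖f x‖ₑ ∂ν₁) * (∫⁻ y, ‖g y‖ₑ ∂ν₂) * rieszKernel σ (s - t) := by
  by_cases hfe : Integrable (fun x => f x • e (s, x)) ν₁
  swap; · simp [integral_undef hfe]
  by_cases hge : Integrable (fun y => g y • e (t, y)) ν₂
  swap; · simp [integral_undef hge]
  calc _ ≤ ∫⁻ x, ∫⁻ y, ‖inner ℂ (f x • e (s, x)) (g y • e (t, y))‖ₑ ∂ν₂ ∂ν₁ :=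
        enorm_inner_integral_integral_le hfe hge
    _ ≤ ∫⁻ x, ∫⁻ y, ‖f x‖ₑ * (‖g y‖ₑ * rieszKernel σ (s - t)) ∂ν₂ ∂ν₁ := by
        gcongr with x y
        rw [enorm_inner_smul_smul, mul_assoc]
        gcongr
        exact he.dispersion s t x y hst
    _ = _ := by
        simp only [lintegral_const_mul _ (hg.enorm.mul_const _), lintegral_mul_const _ hg.enorm,
          lintegral_mul_const _ hf.enorm]
        rw [mul_assoc]

lemma enorm_integral_sq_le [SFinite μ] (he : IsDispersive μ σ e) (t : ℝ) {f : X → ℂ}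
    (hf : Measurable f) : ‖∫ x, f x • e (t, x) ∂μ‖ₑ ^ 2 ≤ ∫⁻ x, ‖f x‖ₑ ^ 2 ∂μ := by
  by_cases hfe : Integrable (fun x => f x • e (t, x)) μ
  swap; · simp [integral_undef hfe]
  have hslice : StronglyMeasurable fun x => e (t, x) :=
    he.stronglyMeasurable.comp_measurable measurable_prodMk_left
  have hK : Measurable fun z : X × X => ‖inner ℂ (e (t, z.1)) (e (t, z.2))‖ₑ :=
    ((hslice.comp_measurable measurable_fst).inner
      (hslice.comp_measurable measurable_snd)).enorm
  simpa using enorm_integral_sq_le_of_schur hfe hK (he.energy t)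
    (fun y => by simpa only [enorm_inner_symm _ (e (t, y))] using he.energy t y) hf.enorm
    (.of_forall fun x => .of_forall fun y => (enorm_inner_smul_smul _ _ _ _).le)

end IsDispersive

end Dispersive

section Slice

variable {α X : Type*} [MeasurableSpace X] {μ : Measure X} {F : α × X → ℂ}

lemma lintegral_slice_rpow {p : ℝ} (hp : 0 < p) (a : α) :
    ∫⁻ x, ‖F (a, x)‖ₑ ^ p ∂μ = eLpNorm' (fun x => F (a, x)) p μ ^ p :=
  lintegral_rpow_enorm_eq_rpow_eLpNorm' hp

variable [MeasurableSpace α]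

lemma measurable_slice (hF : Measurable F) (a : α) : Measurable fun x => F (a, x) :=
  hF.comp measurable_prodMk_left

lemma measurable_eLpNorm'_slice [SFinite μ] (hF : Measurable F) (p : ℝ) :
    Measurable fun a => eLpNorm' (fun x => F (a, x)) p μ :=
  (Measurable.lintegral_prod_right' (f := fun z => ‖F z‖ₑ ^ p) (by fun_prop)).pow_const _

end Slice

section LayerCurve

variable {V : Type*} [NormedAddCommGroup V] [InnerProductSpace ℂ V]
variable {X : Type*} [MeasurableSpace X] {μ : Measure X} {σ p : ℝ} {e : ℝ × X → V}
  {F : ℝ × X → ℂ}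

/-- The `k`-th layer of the function `F (t, ·)`, relative to its own `L^p` norm. -/
def sliceLayer (μ : Measure X) (σ p : ℝ) (F : ℝ × X → ℂ) (k : ℤ) (t : ℝ) : Set X :=
  layer σ p (eLpNorm' (fun x => F (t, x)) p μ) (fun x => ‖F (t, x)‖ₑ) k

/-- The size of the `k`-th layer of `F (t, ·)`. -/
noncomputable def sliceLayerSize (μ : Measure X) (σ p : ℝ) (F : ℝ × X → ℂ) (k : ℤ) (t : ℝ) :
    ℝ≥0∞ :=
  layerSize μ σ p (eLpNorm' (fun x => F (t, x)) p μ) (fun x => ‖F (t, x)‖ₑ) k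

/-- The vectors `∫ F_k(t, x) e(t, x) dx`, where `F_k(t, ·)` is the `k`-th layer of `F (t, ·)`. -/
noncomputable def layerCurve (μ : Measure X) (σ p : ℝ) (e : ℝ × X → V) (F : ℝ × X → ℂ) (k : ℤ)
    (t : ℝ) : V :=
  ∫ x in sliceLayer μ σ p F k t, F (t, x) • e (t, x) ∂μ

lemma measurableSet_sliceLayer (hF : Measurable F) (σ p : ℝ) (k : ℤ) (t : ℝ) :
    MeasurableSet (sliceLayer μ σ p F k t) :=
  measurableSet_layer (measurable_slice hF t).enorm k

section Measurability

variable [SFinite μ]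

lemma measurableSet_setOf_sliceLayer (hF : Measurable F) (σ p : ℝ) (k : ℤ) :
    MeasurableSet {z : ℝ × X | z.2 ∈ sliceLayer μ σ p F k z.1} := by
  have hnorm : Measurable fun z : ℝ × X => eLpNorm' (fun x => F (z.1, x)) p μ :=
    (measurable_eLpNorm'_slice hF p).comp measurable_fst
  exact (measurableSet_lt (hnorm.const_mul _) hF.enorm).inter
    (measurableSet_le hF.enorm (hnorm.const_mul _))

lemma measurable_sliceLayerSize (hF : Measurable F) (σ p : ℝ) (k : ℤ) :
    Measurable (sliceLayerSize μ σ p F k) := by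
  have hint : Measurable fun t => ∫⁻ x in sliceLayer μ σ p F k t, ‖F (t, x)‖ₑ ^ p ∂μ := by
    simp only [← lintegral_indicator (measurableSet_sliceLayer hF σ p k _)]
    exact ((hF.enorm.pow_const p).indicator
      (measurableSet_setOf_sliceLayer hF σ p k)).lintegral_prod_right'
  exact ((measurable_eLpNorm'_slice hF p).pow_const _).mul (hint.pow_const _)

lemma integrable_layerCurve (hF : Measurable F) (σ p : ℝ)
    (hFe : Integrable (fun z => F z • e z) (volume.prod μ)) (k : ℤ) :
    Integrable (layerCurve μ σ p e F k) := by
  have := (hFe.indicator (measurableSet_setOf_sliceLayer (μ := μ) hF σ p k)).integral_prod_left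
  refine this.congr (.of_forall fun t => ?_)
  exact integral_indicator (measurableSet_sliceLayer hF σ p k t)

lemma integral_layerCurve (hF : Measurable F) (σ p : ℝ)
    (hFe : Integrable (fun z => F z • e z) (volume.prod μ)) (k : ℤ) :
    ∫ t, layerCurve μ σ p e F k t =
      ∫ z in {z : ℝ × X | z.2 ∈ sliceLayer μ σ p F k z.1}, F z • e z ∂(volume.prod μ) := by
  have hset := measurableSet_setOf_sliceLayer (μ := μ) hF σ p k
  rw [← integral_indicator hset, integral_prod _ (hFe.indicator hset)]
  exact integral_congr_ae (.of_forall fun t =>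
    (integral_indicator (measurableSet_sliceLayer hF σ p k t)).symm)

end Measurability

lemma tsum_sliceLayerSize_sq_le (hσ : 0 < σ) (hp : 0 < p) (hp2 : p < 2) (hF : Measurable F)
    (t : ℝ) : ∑' k, sliceLayerSize μ σ p F k t ^ 2 ≤ eLpNorm' (fun x => F (t, x)) p μ ^ 2 :=
  tsum_layerSize_sq_le hσ hp hp2 (measurable_slice hF t).enorm (lintegral_slice_rpow hp t).le

variable [CompleteSpace V]

lemma enorm_layerCurve_le [SFinite μ] (he : IsDispersive μ σ e) (hp : 0 < p) (hp2 : p < 2)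
    (hF : Measurable F) (k : ℤ) (t : ℝ) :
    ‖layerCurve μ σ p e F k t‖ₑ
      ≤ 2 ^ (-(k * (σ * (1 / p - 1 / 2)))) * sliceLayerSize μ σ p F k t :=
  (ENNReal.pow_le_pow_left_iff two_ne_zero).1 <|
    ((he.restrict _).enorm_integral_sq_le t (measurable_slice hF t)).trans
    (setLIntegral_layer_sq_le hp hp2 (measurable_slice hF t).enorm k)

lemma enorm_inner_layerCurve_le (he : IsDispersive μ σ e) (hp : 1 < p) (hF : Measurable F)
    (k l : ℤ) {s t : ℝ} (hst : s ≠ t) :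
    ‖inner ℂ (layerCurve μ σ p e F k s) (layerCurve μ σ p e F l t)‖ₑ
      ≤ 2 ^ ((k + l) * (σ * (1 - 1 / p))) * (2 ^ (σ * (1 - 1 / p)) * sliceLayerSize μ σ p F k s *
        (2 ^ (σ * (1 - 1 / p)) * sliceLayerSize μ σ p F l t) * rieszKernel σ (s - t)) := by
  have hlayer (k : ℤ) (t : ℝ) : ∫⁻ x in sliceLayer μ σ p F k t, ‖F (t, x)‖ₑ ∂μ ≤ _ :=
    setLIntegral_layer_le hp (measurable_slice hF t).enorm
      (lintegral_slice_rpow (by linarith) t).le k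
  refine (he.enorm_inner_integral_le hst (measurable_slice hF s) (measurable_slice hF t)).trans
    ((mul_le_mul_left (mul_le_mul' (hlayer k s) (hlayer l t)) _).trans_eq ?_)
  rw [add_mul, two_rpow_add, sliceLayerSize, sliceLayerSize]
  ring

lemma isAtomicFamily_layerCurve [SFinite μ] (he : IsDispersive μ σ e) (hσ : 0 < σ) (hp : 1 < p)
    (hp2 : p < 2) (hF : Measurable F) (hFint : Integrable F (volume.prod μ)) :
    IsAtomicFamily σ (σ * (1 - 1 / p)) (σ * (1 / p - 1 / 2))
      (fun k t => 2 ^ (σ * (1 - 1 / p)) * sliceLayerSize μ σ p F k t)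
      (layerCurve μ σ p e F) where
  measurable k := (measurable_sliceLayerSize hF σ p k).const_mul _
  integrable := integrable_layerCurve hF σ p (he.integrable_smul hFint)
  energy k t := by
    refine (enorm_layerCurve_le he (by linarith) hp2 hF k t).trans ?_
    gcongr
    have : 1 / p ≤ 1 := by rw [div_le_one (by linarith)]; linarith
    refine le_mul_of_one_le_left zero_le ?_
    simpa using two_rpow_mono (mul_nonneg hσ.le (sub_nonneg.2 this))
  dispersion k l _ _ hst := enorm_inner_layerCurve_le he hp hF k l hst

end LayerCurve

/-! ### The dual estimate -/

section DualEstimate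

variable {V : Type*} [NormedAddCommGroup V] [InnerProductSpace ℂ V]
variable {X : Type*} [MeasurableSpace X] {μ : Measure X} {σ p m : ℝ} {e : ℝ × X → V}
  {F : ℝ × X → ℂ}

/-- The dual form of the Strichartz estimate for the family `e`, with Lebesgue exponents `p` in
space and `m` in time, and with constant `C` for the square of the norm. -/
def DualEstimate (μ : Measure X) (e : ℝ × X → V) (p m : ℝ) (C : ℝ≥0∞) : Prop :=
  ∀ F : ℝ × X → ℂ, Measurable F → Integrable F (volume.prod μ) →
    ‖∫ z, F z • e z ∂(volume.prod μ)‖ₑ ^ 2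
      ≤ C * (∫⁻ t, eLpNorm' (fun x => F (t, x)) p μ ^ m) ^ (2 / m)

lemma ae_exists_mem_sliceLayer (hσ : 0 < σ) (hp : 0 < p) (hF : Measurable F) {t : ℝ}
    (ht : eLpNorm' (fun x => F (t, x)) p μ ≠ ∞) :
    ∀ᵐ x ∂μ, F (t, x) ≠ 0 → ∃ k, x ∈ sliceLayer μ σ p F k t := by
  rcases eq_or_ne (eLpNorm' (fun x => F (t, x)) p μ) 0 with h0 | h0
  · filter_upwards [(eLpNorm'_eq_zero_iff hp
      (measurable_slice hF t).aestronglyMeasurable).1 h0] with x hx hne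
    exact absurd hx hne
  · exact .of_forall fun x hx => exists_mem_layer hσ hp h0 ht (enorm_ne_zero.2 hx) enorm_ne_top

lemma ae_prod_exists_mem_sliceLayer [SFinite μ] (hσ : 0 < σ) (hp : 0 < p) (hm : 0 < m)
    (hF : Measurable F) (hfin : ∫⁻ t, eLpNorm' (fun x => F (t, x)) p μ ^ m ≠ ∞) :
    ∀ᵐ z ∂(volume.prod μ), z ∉ ⋃ k, {z : ℝ × X | z.2 ∈ sliceLayer μ σ p F k z.1} → F z = 0 := by
  have hunion := MeasurableSet.iUnion fun k => measurableSet_setOf_sliceLayer (μ := μ) hF σ p k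
  have hzero : MeasurableSet {z | F z = 0} := hF (measurableSet_singleton 0)
  rw [Measure.ae_prod_iff_ae_ae ((hunion.union hzero).congr (by
    ext; simp only [Set.mem_union, Set.mem_ofPred_eq, or_iff_not_imp_left]))]
  filter_upwards [ae_lt_top ((measurable_eLpNorm'_slice hF p).pow_const m) hfin] with t ht
  filter_upwards [ae_exists_mem_sliceLayer hσ hp hF ((ENNReal.rpow_lt_top_iff_of_pos hm).1 ht).ne]
    with x hx hnot
  by_contra hne
  exact hnot (Set.mem_iUnion.2 (hx hne))

lemma hasSum_integral_layerCurve [SFinite μ] (he : IsDispersive μ σ e) (hσ : 0 < σ) (hp : 0 < p)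
    (hm : 0 < m) (hF : Measurable F) (hFint : Integrable F (volume.prod μ))
    (hfin : ∫⁻ t, eLpNorm' (fun x => F (t, x)) p μ ^ m ≠ ∞) :
    HasSum (fun k => ∫ t, layerCurve μ σ p e F k t) (∫ z, F z • e z ∂(volume.prod μ)) := by
  have hFe := he.integrable_smul hFint
  have hdisj : Pairwise (Function.onFun Disjoint
      fun k => {z : ℝ × X | z.2 ∈ sliceLayer μ σ p F k z.1}) := fun i j hij =>
    Set.disjoint_left.2 fun z hi hj =>
      Set.disjoint_left.1 (pairwise_disjoint_layer hσ hp _ _ hij) hi hj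
  have hae : ∀ᵐ z ∂(volume.prod μ),
      z ∉ ⋃ k, {z : ℝ × X | z.2 ∈ sliceLayer μ σ p F k z.1} → F z • e z = 0 := by
    filter_upwards [ae_prod_exists_mem_sliceLayer hσ hp hm hF hfin] with z hz hnot
    rw [hz hnot, zero_smul]
  simp only [integral_layerCurve hF σ p hFe]
  rw [← setIntegral_eq_integral_of_ae_compl_eq_zero hae]
  exact hasSum_integral_iUnion (fun k => measurableSet_setOf_sliceLayer hF σ p k) hdisj
    hFe.integrableOn

/-- It suffices to bound the finite sums over layers. -/
lemma dualEstimate_of_sum_layerCurve_le [SFinite μ] (he : IsDispersive μ σ e) (hσ : 0 < σ)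
    (hp : 0 < p) (hm : 0 < m) {C : ℝ≥0∞} (hC : C ≠ 0)
    (hsum : ∀ F, Measurable F → Integrable F (volume.prod μ) → ∀ S : Finset ℤ,
      ‖∑ k ∈ S, ∫ t, layerCurve μ σ p e F k t‖ₑ ^ 2
        ≤ C * (∫⁻ t, eLpNorm' (fun x => F (t, x)) p μ ^ m) ^ (2 / m)) :
    DualEstimate μ e p m C := by
  intro F hF hFint
  by_cases hfin : ∫⁻ t, eLpNorm' (fun x => F (t, x)) p μ ^ m = ∞
  · simp [hfin, ENNReal.top_rpow_of_pos (show 0 < 2 / m by positivity), ENNReal.mul_top hC]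
  · have hlim := hasSum_integral_layerCurve he hσ hp hm hF hFint hfin
    exact le_of_tendsto ((ENNReal.continuous_pow 2).tendsto _ |>.comp hlim.enorm)
      (.of_forall (hsum F hF hFint))

lemma lintegral_const_mul_rpow_rpow {m : ℝ} (hm : 0 < m) (a : ℝ≥0∞) {φ : ℝ → ℝ≥0∞}
    (hφ : Measurable φ) : (∫⁻ t, (a * φ t) ^ m) ^ (2 / m) = a ^ 2 * (∫⁻ t, φ t ^ m) ^ (2 / m) := by
  simp only [ENNReal.mul_rpow_of_nonneg _ _ hm.le]
  rw [lintegral_const_mul _ (hφ.pow_const m), ENNReal.mul_rpow_of_nonneg _ _ (by positivity),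
    ← ENNReal.rpow_mul, mul_div_cancel₀ _ hm.ne', ENNReal.rpow_two]

namespace IsDispersive

variable [CompleteSpace V]

theorem exists_dualEstimate_interior (hσ : 0 < σ) (hp : 1 < p) (hp2 : p < 2) (hm1 : 1 < m)
    (hm2 : m < 2) (hadm : σ * (1 / p - 1 / 2) = 1 - 1 / m) :
    ∃ C ≠ ∞, ∀ {μ : Measure X} [SFinite μ] {e : ℝ × X → V}, IsDispersive μ σ e →
      DualEstimate μ e p m C := by
  set α := σ * (1 - 1 / p)
  set β := σ * (1 / p - 1 / 2)
  have hα_pos : 0 < α := mul_pos hσ (by simpa using inv_lt_one_of_one_lt₀ hp)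
  have hβ_pos : 0 < β := by rw [hadm]; simpa using inv_lt_one_of_one_lt₀ hm1
  have hm0 : 0 < m := by linarith
  refine ⟨2 ^ min α β * geomSum (min α β) * (2 * hlsConst m * (2 ^ α) ^ 2), ?_,
    fun {μ} _ {e} he => ?_⟩
  · have hgeom := geomSum_ne_top (lt_min hα_pos hβ_pos)
    finiteness [hgeom, two_rpow_ne_top α, two_rpow_ne_top (min α β),
      (ENNReal.ofReal_ne_top : hlsConst m ≠ ∞)]
  refine dualEstimate_of_sum_layerCurve_le he hσ (by linarith) hm0 ?_ fun F hF hFint S => ?_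
  · simp [geomSum_ne_zero, hlsConst_ne_zero hm0 hm2]
  have hnorm := measurable_eLpNorm'_slice (μ := μ) hF p
  refine ((isAtomicFamily_layerCurve he hσ hp hp2 hF hFint).enorm_sum_integral_sq_le hm1 hm2 hα_pos
    hadm (by ring) S (hnorm.const_mul (2 ^ α)) fun t => ?_).trans_eq ?_
  · simp only [mul_pow, ENNReal.tsum_mul_left]
    gcongr
    exact tsum_sliceLayerSize_sq_le hσ (by linarith) hp2 hF t
  · rw [lintegral_const_mul_rpow_rpow hm0 _ hnorm]
    ring

theorem exists_dualEstimate_endpoint (hσ : 1 < σ) (hp : 1 < p) (hp2 : p < 2)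
    (hadm : σ * (1 / p - 1 / 2) = 1 / 2) :
    ∃ C ≠ ∞, ∀ {μ : Measure X} [SFinite μ] {e : ℝ × X → V}, IsDispersive μ σ e →
      DualEstimate μ e p 2 C := by
  have hα : σ * (1 - 1 / p) = (σ - 1) / 2 := by linarith
  refine ⟨6 * geomSum (min 1 (σ - 1) / 14) ^ 2 * (2 ^ ((σ - 1) / 2)) ^ 2, ?_,
    fun {μ} _ {e} he => ?_⟩
  · have := geomSum_ne_top (div_pos (lt_min one_pos (sub_pos.2 hσ)) (by norm_num : (0 : ℝ) < 14))
    finiteness [two_rpow_ne_top ((σ - 1) / 2)]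
  refine dualEstimate_of_sum_layerCurve_le he (by linarith) (by linarith) two_pos ?_
    fun F hF hFint S => ?_
  · simp [geomSum_ne_zero]
  have hatomic := isAtomicFamily_layerCurve he (by linarith) hp hp2 hF hFint
  rw [hα, hadm] at hatomic
  have hnorm := measurable_eLpNorm'_slice (μ := μ) hF p
  have hsum (t : ℝ) : ∑' k, (2 ^ ((σ - 1) / 2) * sliceLayerSize μ σ p F k t) ^ 2
      ≤ (2 ^ ((σ - 1) / 2) * eLpNorm' (fun x => F (t, x)) p μ) ^ (2 : ℝ) := by
    simp only [mul_pow, ENNReal.tsum_mul_left, ENNReal.rpow_two]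
    gcongr
    exact tsum_sliceLayerSize_sq_le (by linarith) (by linarith) hp2 hF t
  have hscale := lintegral_const_mul_rpow_rpow two_pos (2 ^ ((σ - 1) / 2)) hnorm
  rw [div_self two_ne_zero, ENNReal.rpow_one, ENNReal.rpow_one] at hscale
  rw [div_self two_ne_zero, ENNReal.rpow_one]
  rw [mul_assoc, ← hscale]
  exact (hatomic.enorm_sum_integral_sq_le_endpoint hσ S).trans
    (mul_le_mul_right (lintegral_mono hsum) _)

theorem dualEstimate_one [SFinite μ] (hm1 : 1 < m) (hm2 : m < 2)
    (he : IsDispersive μ (2 - 2 / m) e) : DualEstimate μ e 1 m (2 * hlsConst m) := by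
  intro F hF hFint
  have hFe := he.integrable_smul hFint
  rw [integral_prod _ hFe]
  refine (enorm_integral_sq_le_of_decay hm1 hm2 hFe.integral_prod_left
    (measurable_eLpNorm'_slice (μ := μ) hF 1) (A := 1) fun s t hst => ?_).trans_eq ?_
  · simpa [eLpNorm'] using
      he.enorm_inner_integral_le hst (measurable_slice hF s) (measurable_slice hF t)
  · rw [one_mul, mul_assoc]

end IsDispersive

end DualEstimate

/-! ### Duality of mixed Lebesgue norms -/

section Duality

lemma le_rpow_of_le_mul_rpow {x D : ℝ≥0∞} {q m : ℝ} (hqm : q.HolderConjugate m)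
    (hx : x ≠ ∞) (h : x ≤ D * x ^ (1 / m)) : x ≤ D ^ q := by
  rcases eq_or_ne x 0 with rfl | hx0
  · exact zero_le
  rw [← ENNReal.rpow_inv_le_iff hqm.pos]
  refine (ENNReal.mul_le_mul_iff_left (c := x ^ (1 / m)) (by simp [hx0, hx]) ?_).1 ?_
  · finiteness [hx, hx0, one_div_pos.2 hqm.symm.pos]
  calc x ^ q⁻¹ * x ^ (1 / m) = x := by
        rw [← ENNReal.rpow_add _ _ hx0 hx, one_div, hqm.inv_add_inv_eq_one, ENNReal.rpow_one]
    _ ≤ _ := h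

lemma enorm_integral_eq_lintegral_enorm {X : Type*} [MeasurableSpace X] {μ : Measure X} {g : X → ℂ}
    (hg : Integrable g μ) (hnonneg : ∀ x, g x = (‖g x‖ : ℂ)) :
    ‖∫ x, g x ∂μ‖ₑ = ∫⁻ x, ‖g x‖ₑ ∂μ := by
  rw [integral_congr_ae (.of_forall hnonneg), integral_complex_ofReal, ← ofReal_norm,
    Complex.norm_real, Real.norm_of_nonneg (integral_nonneg fun x => norm_nonneg _),
    ofReal_integral_norm_eq_lintegral_enorm hg]

variable {α X : Type*} [MeasurableSpace X] {μ : Measure X} {q r p m : ℝ}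
  {w : α × X → ℂ}

/-- The function which is extremal, up to normalisation, in the pairing of `w` with the dual of the
mixed Lebesgue space with exponents `q` in the first variable and `r` in the second. -/
noncomputable def dualFun (μ : Measure X) (q r : ℝ) (w : α × X → ℂ) (z : α × X) : ℂ :=
  starRingEnd ℂ (w z) *
    ((‖w z‖ ^ (r - 2) * (eLpNorm' (fun x => w (z.1, x)) r μ).toReal ^ (q - r) : ℝ) : ℂ)

lemma dualFun_mul_self (z : α × X) :
    dualFun μ q r w z * w z = (‖dualFun μ q r w z * w z‖ : ℂ) := by
  have hreal : dualFun μ q r w z * w z = ((‖w z‖ ^ 2 *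
      (‖w z‖ ^ (r - 2) * (eLpNorm' (fun x => w (z.1, x)) r μ).toReal ^ (q - r)) : ℝ) : ℂ) := by
    rw [dualFun, mul_right_comm, Complex.conj_mul']
    push_cast
    rfl
  rw [hreal, Complex.norm_real, Real.norm_of_nonneg (by positivity)]

lemma enorm_dualFun (hr : 1 < r) {a : α} (h0 : eLpNorm' (fun x => w (a, x)) r μ ≠ 0)
    (htop : eLpNorm' (fun x => w (a, x)) r μ ≠ ∞) (x : X) :
    ‖dualFun μ q r w (a, x)‖ₑ
      = ‖w (a, x)‖ₑ ^ (r - 1) * eLpNorm' (fun x => w (a, x)) r μ ^ (q - r) := by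
  have hN : 0 < (eLpNorm' (fun x => w (a, x)) r μ).toReal := ENNReal.toReal_pos h0 htop
  rcases eq_or_ne (w (a, x)) 0 with hw | hw
  · simp only [dualFun, hw, map_zero, zero_mul, enorm_zero]
    rw [ENNReal.zero_rpow_of_pos (by linarith), zero_mul]
  have hw' : 0 < ‖w (a, x)‖ := norm_pos_iff.2 hw
  rw [dualFun, enorm_mul, RCLike.enorm_conj, ← ofReal_norm (((_ : ℝ) : ℂ)), Complex.norm_real,
    Real.norm_of_nonneg (by positivity), ENNReal.ofReal_mul (by positivity),
    ← ENNReal.ofReal_rpow_of_pos hw', ← ENNReal.ofReal_rpow_of_pos hN, ofReal_norm,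
    ENNReal.ofReal_toReal htop, ← mul_assoc, show r - 1 = 1 + (r - 2) by ring,
    ENNReal.rpow_add _ _ (enorm_ne_zero.2 hw) enorm_ne_top, ENNReal.rpow_one]

lemma eLpNorm'_dualFun_le (hrp : r.HolderConjugate p) {a : α} (hw : Measurable fun x => w (a, x))
    (htop : eLpNorm' (fun x => w (a, x)) r μ ≠ ∞) :
    eLpNorm' (fun x => dualFun μ q r w (a, x)) p μ
      ≤ eLpNorm' (fun x => w (a, x)) r μ ^ (q - 1) := by
  rcases eq_or_ne (eLpNorm' (fun x => w (a, x)) r μ) 0 with h0 | h0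
  · rw [eLpNorm'_eq_zero_of_ae_zero hrp.symm.pos]
    · exact zero_le
    · filter_upwards [(eLpNorm'_eq_zero_iff hrp.pos hw.aestronglyMeasurable).1 h0] with x hx
      simp_all [dualFun]
  have hpow (x : X) : ‖dualFun μ q r w (a, x)‖ₑ ^ p
      = ‖w (a, x)‖ₑ ^ r * eLpNorm' (fun x => w (a, x)) r μ ^ ((q - r) * p) := by
    rw [enorm_dualFun hrp.lt h0 htop, ENNReal.mul_rpow_of_nonneg _ _ hrp.symm.nonneg,
      ← ENNReal.rpow_mul, ← ENNReal.rpow_mul, hrp.sub_one_mul_conj]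
  refine (ENNReal.rpow_le_rpow_iff hrp.symm.pos).1 (le_of_eq ?_)
  simp only [← lintegral_slice_rpow (F := dualFun μ q r w) hrp.symm.pos, hpow]
  rw [lintegral_mul_const _ (hw.enorm.pow_const r), lintegral_slice_rpow hrp.pos,
    ← ENNReal.rpow_add _ _ h0 htop, ← ENNReal.rpow_mul]
  congr 1
  linear_combination -hrp.sub_one_mul_conj

lemma lintegral_enorm_dualFun_mul (hr : 1 < r) (hq : 0 < q) {a : α}
    (hw : Measurable fun x => w (a, x)) (htop : eLpNorm' (fun x => w (a, x)) r μ ≠ ∞) :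
    ∫⁻ x, ‖dualFun μ q r w (a, x) * w (a, x)‖ₑ ∂μ = eLpNorm' (fun x => w (a, x)) r μ ^ q := by
  have hr0 : 0 < r := by linarith
  rcases eq_or_ne (eLpNorm' (fun x => w (a, x)) r μ) 0 with h0 | h0
  · rw [h0, ENNReal.zero_rpow_of_pos hq, lintegral_congr_ae (g := 0), Pi.zero_def, lintegral_zero]
    filter_upwards [(eLpNorm'_eq_zero_iff hr0 hw.aestronglyMeasurable).1 h0] with x hx
    simp_all
  have hmul (x : X) : ‖dualFun μ q r w (a, x) * w (a, x)‖ₑ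
      = ‖w (a, x)‖ₑ ^ r * eLpNorm' (fun x => w (a, x)) r μ ^ (q - r) := by
    rw [enorm_mul, enorm_dualFun hr h0 htop, mul_right_comm]
    nth_rewrite 2 [← ENNReal.rpow_one ‖w (a, x)‖ₑ]
    rw [← ENNReal.rpow_add_of_nonneg _ _ (by linarith) zero_le_one, sub_add_cancel]
  simp only [hmul]
  rw [lintegral_mul_const _ (hw.enorm.pow_const r), lintegral_slice_rpow hr0,
    ← ENNReal.rpow_add _ _ h0 htop, add_sub_cancel]

lemma eLpNorm'_slice_le (hr : 0 < r) {K : ℝ} (hK : ∀ z, ‖w z‖ ≤ K) (a : α) :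
    eLpNorm' (fun x => w (a, x)) r μ ≤ ENNReal.ofReal K * μ Set.univ ^ (1 / r) :=
  (eLpNorm'_le_eLpNormEssSup_mul_rpow_measure_univ hr).trans <| by
    gcongr
    exact eLpNormEssSup_le_of_ae_bound (.of_forall fun x => hK (a, x))

variable [MeasurableSpace α] {ν : Measure α}

lemma measurable_dualFun [SFinite μ] (hw : Measurable w) : Measurable (dualFun μ q r w) := by
  have hnorm : Measurable fun z : α × X => eLpNorm' (fun x => w (z.1, x)) r μ :=
    (measurable_eLpNorm'_slice hw r).comp measurable_fst
  unfold dualFun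
  fun_prop

variable [IsFiniteMeasure ν] [IsFiniteMeasure μ]

lemma integrable_dualFun (hrp : r.HolderConjugate p) (hq : 1 ≤ q) (hw : Measurable w) {K : ℝ}
    (hK : ∀ z, ‖w z‖ ≤ K) : Integrable (dualFun μ q r w) (ν.prod μ) := by
  have hmeas : Measurable (dualFun μ q r w) := measurable_dualFun hw
  set M := ENNReal.ofReal K * μ Set.univ ^ (1 / r)
  have hM : M ≠ ∞ := by finiteness [hrp.pos]
  refine ⟨hmeas.aestronglyMeasurable, ?_⟩
  calc ∫⁻ z, ‖dualFun μ q r w z‖ₑ ∂(ν.prod μ)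
      = ∫⁻ a, eLpNorm' (fun x => dualFun μ q r w (a, x)) 1 μ ∂ν := by
        simp only [eLpNorm', ENNReal.rpow_one, div_one]
        exact lintegral_prod _ hmeas.enorm.aemeasurable
    _ ≤ ∫⁻ _, M ^ (q - 1) * μ Set.univ ^ (1 / 1 - 1 / p) ∂ν := by
        gcongr with a
        refine (eLpNorm'_le_eLpNorm'_mul_rpow_measure_univ zero_lt_one hrp.symm.lt.le
          (measurable_slice hmeas a).aestronglyMeasurable).trans ?_
        gcongr
        have hle := eLpNorm'_slice_le (μ := μ) hrp.pos hK a
        exact (eLpNorm'_dualFun_le hrp (measurable_slice hw a) (ne_top_of_le_ne_top hM hle)).trans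
          (by gcongr)
    _ < ∞ := by
        rw [lintegral_const]
        have : 0 ≤ 1 / 1 - 1 / p := by simpa using (inv_lt_one_of_one_lt₀ hrp.symm.lt).le
        finiteness [sub_nonneg.2 hq]

theorem lintegral_eLpNorm'_rpow_le_of_dual (hrp : r.HolderConjugate p) (hqm : q.HolderConjugate m)
    (hw : Measurable w) {K : ℝ} (hK : ∀ z, ‖w z‖ ≤ K) {D : ℝ≥0∞}
    (hD : ∀ F : α × X → ℂ, Measurable F → Integrable F (ν.prod μ) →
      ‖∫ z, F z * w z ∂(ν.prod μ)‖ₑ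
        ≤ D * (∫⁻ a, eLpNorm' (fun x => F (a, x)) p μ ^ m ∂ν) ^ (1 / m)) :
    ∫⁻ a, eLpNorm' (fun x => w (a, x)) r μ ^ q ∂ν ≤ D ^ q := by
  have hmeas : Measurable (dualFun μ q r w) := measurable_dualFun hw
  have hint := integrable_dualFun (ν := ν) (μ := μ) hrp hqm.lt.le hw hK
  have htop (a : α) : eLpNorm' (fun x => w (a, x)) r μ ≠ ∞ :=
    ne_top_of_le_ne_top (by finiteness [hrp.pos]) (eLpNorm'_slice_le hrp.pos hK a)
  have hfin : ∫⁻ a, eLpNorm' (fun x => w (a, x)) r μ ^ q ∂ν ≠ ∞ := by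
    refine ne_top_of_le_ne_top ?_ (lintegral_mono fun a =>
      ENNReal.rpow_le_rpow (eLpNorm'_slice_le hrp.pos hK a) hqm.nonneg)
    rw [lintegral_const]
    finiteness [hrp.pos, hqm.pos]
  refine le_rpow_of_le_mul_rpow hqm hfin ?_
  calc ∫⁻ a, eLpNorm' (fun x => w (a, x)) r μ ^ q ∂ν
      = ∫⁻ z, ‖dualFun μ q r w z * w z‖ₑ ∂(ν.prod μ) := by
        rw [lintegral_prod (fun z => ‖dualFun μ q r w z * w z‖ₑ) (hmeas.mul hw).enorm.aemeasurable]
        exact lintegral_congr fun a => (lintegral_enorm_dualFun_mul hrp.lt hqm.pos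
          (measurable_slice hw a) (htop a)).symm
    _ = ‖∫ z, dualFun μ q r w z * w z ∂(ν.prod μ)‖ₑ :=
        (enorm_integral_eq_lintegral_enorm (hint.mul_bdd hw.aestronglyMeasurable (.of_forall hK))
          dualFun_mul_self).symm
    _ ≤ D * (∫⁻ a, eLpNorm' (fun x => dualFun μ q r w (a, x)) p μ ^ m ∂ν) ^ (1 / m) :=
        hD _ hmeas hint
    _ ≤ D * (∫⁻ a, eLpNorm' (fun x => w (a, x)) r μ ^ q ∂ν) ^ (1 / m) := by
        gcongr with a
        · exact hqm.symm.one_div_nonneg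
        refine (ENNReal.rpow_le_rpow (eLpNorm'_dualFun_le hrp (measurable_slice hw a) (htop a))
          hqm.symm.nonneg).trans_eq ?_
        rw [← ENNReal.rpow_mul, hqm.sub_one_mul_conj]

end Duality

/-! ### Strichartz estimates for dispersive families -/

section InnerEstimate

variable {V : Type*} [NormedAddCommGroup V] [InnerProductSpace ℂ V]
variable {X : Type*} [MeasurableSpace X] {μ : Measure X} {σ p q r m : ℝ} {e : ℝ × X → V}
  {C : ℝ≥0∞}

lemma IsDispersive.measurable_inner (he : IsDispersive μ σ e) (v : V) :
    Measurable fun z => inner ℂ (e z) v :=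
  (he.stronglyMeasurable.inner stronglyMeasurable_const).measurable

lemma IsDispersive.exists_norm_inner_le (he : IsDispersive μ σ e) (v : V) :
    ∃ K : ℝ, ∀ z, ‖inner ℂ (e z) v‖ ≤ K := by
  obtain ⟨K, hK⟩ := he.exists_norm_le
  refine ⟨K * ‖v‖, fun z => (norm_inner_le_norm _ _).trans ?_⟩
  gcongr
  exact hK z

lemma DualEstimate.of_one [IsFiniteMeasure μ] (h : DualEstimate μ e 1 m C) (hp : 1 ≤ p)
    (hm : 0 < m) : DualEstimate μ e p m (C * (μ Set.univ ^ (1 - 1 / p)) ^ 2) := by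
  intro F hF hFint
  calc ‖∫ z, F z • e z ∂(volume.prod μ)‖ₑ ^ 2
      ≤ C * (∫⁻ t, eLpNorm' (fun x => F (t, x)) 1 μ ^ m) ^ (2 / m) := h F hF hFint
    _ ≤ C * (∫⁻ t, (μ Set.univ ^ (1 - 1 / p) * eLpNorm' (fun x => F (t, x)) p μ) ^ m)
          ^ (2 / m) := by
        gcongr with t
        simpa [mul_comm] using eLpNorm'_le_eLpNorm'_mul_rpow_measure_univ (μ := μ) zero_lt_one hp
          (measurable_slice hF t).aestronglyMeasurable
    _ = _ := by
        rw [lintegral_const_mul_rpow_rpow hm _ (measurable_eLpNorm'_slice hF p), mul_assoc]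

lemma DualEstimate.enorm_setIntegral_sq_le [SFinite μ] (h : DualEstimate μ e p m C) (hp : 0 < p)
    (hm : 0 < m) {T : Set ℝ} (hT : MeasurableSet T) {F : ℝ × X → ℂ} (hF : Measurable F)
    (hFint : Integrable F ((volume.restrict T).prod μ)) :
    ‖∫ z, F z • e z ∂((volume.restrict T).prod μ)‖ₑ ^ 2
      ≤ C * (∫⁻ t in T, eLpNorm' (fun x => F (t, x)) p μ ^ m) ^ (2 / m) := by
  have hprod : (volume.restrict T).prod μ = (volume.prod μ).restrict (T ×ˢ Set.univ) := by
    rw [← Measure.prod_restrict, Measure.restrict_univ]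
  have hTX : MeasurableSet (T ×ˢ (Set.univ : Set X)) := hT.prod .univ
  have hslice (t : ℝ) : eLpNorm' (fun x => (T ×ˢ Set.univ).indicator F (t, x)) p μ ^ m
      = T.indicator (fun t => eLpNorm' (fun x => F (t, x)) p μ ^ m) t := by
    by_cases ht : t ∈ T
    · simp [ht, Set.indicator]
    · simp [ht, Set.indicator, eLpNorm', hp, hm]
  rw [hprod] at hFint ⊢
  rw [← integral_indicator hTX, ← lintegral_indicator hT, Set.indicator_smul_left]
  simp only [← hslice]
  exact h _ (hF.indicator hTX) ((integrable_indicator_iff hTX).2 hFint)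

variable [CompleteSpace V]

lemma inner_integral_smul_left {f : X → ℂ} {g : X → V} (h : Integrable (fun x => f x • g x) μ)
    (v : V) :
    inner ℂ (∫ x, f x • g x ∂μ) v = ∫ x, starRingEnd ℂ (f x) * inner ℂ (g x) v ∂μ := by
  rw [← inner_conj_symm, ← integral_inner h, ← integral_conj]
  simp only [inner_conj_symm, inner_smul_left]

theorem IsDispersive.lintegral_enorm_inner_sq_le [SigmaFinite μ] (he : IsDispersive μ σ e) (v : V)
    (t : ℝ) : ∫⁻ x, ‖inner ℂ (e (t, x)) v‖ₑ ^ 2 ∂μ ≤ ‖v‖ₑ ^ 2 := by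
  obtain ⟨K, hK⟩ := he.exists_norm_inner_le v
  obtain ⟨L, hL⟩ := he.exists_norm_le
  set f : X → ℂ := fun x => inner ℂ (e (t, x)) v
  have hfm : Measurable f := measurable_slice (he.measurable_inner v) t
  refine lintegral_le_of_forall_fin_meas_le _ fun B _ hBfin => ?_
  have : IsFiniteMeasure (μ.restrict B) := isFiniteMeasure_restrict.2 hBfin
  have hfint : Integrable f (μ.restrict B) :=
    .of_bound hfm.aestronglyMeasurable K (.of_forall fun x => hK (t, x))
  have hfe : Integrable (fun x => f x • e (t, x)) (μ.restrict B) :=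
    hfint.smul_bdd L (he.stronglyMeasurable.comp_measurable
      measurable_prodMk_left).aestronglyMeasurable (.of_forall fun x => hL (t, x))
  have hsq (x : X) : ‖starRingEnd ℂ (f x) * f x‖ₑ = ‖f x‖ₑ ^ 2 := by
    rw [enorm_mul, RCLike.enorm_conj, sq]
  have hnorm : ∫⁻ x in B, ‖f x‖ₑ ^ 2 ∂μ = ‖inner ℂ (∫ x in B, f x • e (t, x) ∂μ) v‖ₑ := by
    rw [inner_integral_smul_left hfe, enorm_integral_eq_lintegral_enorm
      (hfint.bdd_mul (c := K) (by fun_prop) (.of_forall fun x => by simpa using hK (t, x)))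
      (fun x => by rw [norm_mul, RCLike.norm_conj, Complex.conj_mul']; push_cast; ring)]
    simp only [hsq]
  have hself : (∫⁻ x in B, ‖f x‖ₑ ^ 2 ∂μ) ^ 2 ≤ ‖v‖ₑ ^ 2 * ∫⁻ x in B, ‖f x‖ₑ ^ 2 ∂μ := by
    nth_rewrite 1 [hnorm]
    refine (pow_le_pow_left' (enorm_inner_le_enorm_mul_enorm _ _) 2).trans ?_
    rw [mul_pow, mul_comm]
    gcongr
    exact (he.restrict B).enorm_integral_sq_le t hfm
  have hfin : ∫⁻ x in B, ‖f x‖ₑ ^ 2 ∂μ ≠ ∞ := by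
    rw [hnorm]; exact enorm_ne_top
  rcases eq_or_ne (∫⁻ x in B, ‖f x‖ₑ ^ 2 ∂μ) 0 with h0 | h0
  · exact h0.trans_le zero_le
  · rw [sq] at hself
    exact (ENNReal.mul_le_mul_iff_left h0 hfin).1 hself

theorem DualEstimate.lintegral_eLpNorm'_inner_rpow_le [IsFiniteMeasure μ]
    (hdual : DualEstimate μ e p m C) (he : IsDispersive μ σ e) (hrp : r.HolderConjugate p)
    (hqm : q.HolderConjugate m) (v : V) :
    ∫⁻ t, eLpNorm' (fun x => inner ℂ (e (t, x)) v) r μ ^ q ≤ (C ^ (1 / 2 : ℝ) * ‖v‖ₑ) ^ q := by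
  obtain ⟨K, hK⟩ := he.exists_norm_inner_le v
  refine lintegral_le_of_forall_fin_meas_le _ fun T hT hTfin => ?_
  have : IsFiniteMeasure (volume.restrict T) := isFiniteMeasure_restrict.2 hTfin
  refine lintegral_eLpNorm'_rpow_le_of_dual hrp hqm (he.measurable_inner v) hK fun F hF hFint => ?_
  have hconj : Integrable (fun z => starRingEnd ℂ (F z)) ((volume.restrict T).prod μ) :=
    hFint.congr' (by fun_prop) (.of_forall fun z => (RCLike.norm_conj _).symm)
  have hFe := he.integrable_smul hconj
  have hsq := hdual.enorm_setIntegral_sq_le hrp.symm.pos hqm.symm.pos hT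
    (F := fun z => starRingEnd ℂ (F z)) (by fun_prop) hconj
  have hpair : ∫ z, F z * inner ℂ (e z) v ∂((volume.restrict T).prod μ)
      = inner ℂ (∫ z, starRingEnd ℂ (F z) • e z ∂((volume.restrict T).prod μ)) v := by
    simp [inner_integral_smul_left hFe]
  rw [hpair, ← ENNReal.pow_le_pow_left_iff two_ne_zero]
  refine (pow_le_pow_left' (enorm_inner_le_enorm_mul_enorm _ _) 2).trans ?_
  rw [mul_pow]
  refine (mul_le_mul_left hsq _).trans_eq ?_
  simp only [eLpNorm', RCLike.enorm_conj, mul_pow, ← ENNReal.rpow_natCast, ← ENNReal.rpow_mul]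
  norm_num
  ring_nf

lemma mul_meas_rpow_le_eLpNorm' {f : X → ℂ} (hf : Measurable f) (hp : 0 < p) (c : ℝ≥0∞) :
    c * μ {x | c ≤ ‖f x‖ₑ} ^ (1 / p) ≤ eLpNorm' f p μ := by
  have hset : {x | c ≤ ‖f x‖ₑ} = {x | c ^ p ≤ ‖f x‖ₑ ^ p} := by
    simp only [ENNReal.rpow_le_rpow_iff hp]
  calc c * μ {x | c ≤ ‖f x‖ₑ} ^ (1 / p)
      = (c ^ p * μ {x | c ^ p ≤ ‖f x‖ₑ ^ p}) ^ (1 / p) := by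
        rw [ENNReal.mul_rpow_of_nonneg _ _ (by positivity), one_div, ENNReal.rpow_rpow_inv hp.ne',
          hset]
    _ ≤ eLpNorm' f p μ := by
        unfold eLpNorm'
        gcongr
        exact mul_meas_ge_le_lintegral (hf.enorm.pow_const p) _

lemma tendsto_rpow_one_div_natCast_atTop {a : ℝ≥0∞} (h0 : a ≠ 0) (htop : a ≠ ∞) :
    Filter.Tendsto (fun n : ℕ => a ^ (1 / (n : ℝ))) Filter.atTop (nhds 1) := by
  lift a to NNReal using htop
  have ha : a ≠ 0 := by simpa using h0
  have hcont : Filter.Tendsto (fun n : ℕ => a ^ (1 / (n : ℝ))) Filter.atTop (nhds (a ^ (0 : ℝ))) :=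
    (NNReal.continuousAt_rpow (.inl ha)).tendsto.comp
      (tendsto_const_nhds.prodMk_nhds tendsto_one_div_atTop_nhds_zero_nat)
  rw [NNReal.rpow_zero] at hcont
  simpa [ENNReal.coe_rpow_of_ne_zero ha] using ENNReal.tendsto_coe.2 hcont

lemma eLpNormEssSup_le_liminf_eLpNorm' [IsFiniteMeasure μ] {f : X → ℂ} (hf : Measurable f) :
    eLpNormEssSup f μ ≤ Filter.liminf (fun n : ℕ => eLpNorm' f n μ) Filter.atTop := by
  refine le_of_forall_lt_imp_le_of_dense fun c hc => ?_
  have hδ : μ {x | c ≤ ‖f x‖ₑ} ≠ 0 := fun h0 =>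
    hc.not_ge (essSup_le_of_ae_le c
      (ae_iff.2 (measure_mono_null (fun x hx => (not_le.1 hx).le) h0)))
  have hlim : Filter.Tendsto (fun n : ℕ => c * μ {x | c ≤ ‖f x‖ₑ} ^ (1 / (n : ℝ))) Filter.atTop
      (nhds c) := by
    simpa using ENNReal.Tendsto.const_mul
      (tendsto_rpow_one_div_natCast_atTop hδ (measure_ne_top _ _)) (.inl one_ne_zero)
  rw [← hlim.liminf_eq]
  refine Filter.liminf_le_liminf ?_
  filter_upwards [Filter.eventually_gt_atTop 0] with n hn
  exact mul_meas_rpow_le_eLpNorm' hf (Nat.cast_pos.2 hn) c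

lemma rpow_liminf {q : ℝ} (hq : 0 < q) (u : ℕ → ℝ≥0∞) :
    Filter.liminf u Filter.atTop ^ q = Filter.liminf (fun n => u n ^ q) Filter.atTop :=
  (ENNReal.orderIsoRpow q hq).liminf_apply

theorem DualEstimate.lintegral_eLpNormEssSup_inner_rpow_le [IsFiniteMeasure μ]
    (hdual : DualEstimate μ e 1 m C) (he : IsDispersive μ σ e) (hqm : q.HolderConjugate m) (v : V) :
    ∫⁻ t, eLpNormEssSup (fun x => inner ℂ (e (t, x)) v) μ ^ q ≤ (C ^ (1 / 2 : ℝ) * ‖v‖ₑ) ^ q := by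
  rcases eq_or_ne μ 0 with rfl | hμ
  · simp [hqm.pos]
  have hμ0 : μ Set.univ ≠ 0 := by simpa using hμ
  have hw := he.measurable_inner v
  set D : ℕ → ℝ≥0∞ := fun n => (C * (μ Set.univ ^ (1 / (n : ℝ))) ^ 2) ^ (1 / 2 : ℝ) * ‖v‖ₑ
  have hD : Filter.Tendsto (fun n => D n ^ q) Filter.atTop
      (nhds ((C ^ (1 / 2 : ℝ) * ‖v‖ₑ) ^ q)) := by
    have hmass := tendsto_rpow_one_div_natCast_atTop hμ0 (measure_ne_top μ _)
    have hC := ENNReal.Tendsto.const_mul (a := C)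
      (((ENNReal.continuous_pow 2).tendsto 1).comp hmass)
      (by simp)
    rw [one_pow, mul_one] at hC
    exact (ENNReal.Tendsto.mul_const (hC.ennrpow_const _) (.inr enorm_ne_top)).ennrpow_const q
  calc ∫⁻ t, eLpNormEssSup (fun x => inner ℂ (e (t, x)) v) μ ^ q
      ≤ ∫⁻ t, Filter.liminf (fun n : ℕ => eLpNorm' (fun x => inner ℂ (e (t, x)) v) n μ ^ q)
          Filter.atTop := by
        gcongr with t
        rw [← rpow_liminf hqm.pos]
        gcongr
        · exact hqm.nonneg
        exact eLpNormEssSup_le_liminf_eLpNorm' (measurable_slice hw t)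
    _ ≤ Filter.liminf (fun n : ℕ =>
          ∫⁻ t, eLpNorm' (fun x => inner ℂ (e (t, x)) v) n μ ^ q) Filter.atTop :=
        lintegral_liminf_le fun n => (measurable_eLpNorm'_slice hw n).pow_const q
    _ ≤ Filter.liminf (fun n => D n ^ q) Filter.atTop := by
        refine Filter.liminf_le_liminf ?_
        filter_upwards [Filter.eventually_gt_atTop 1] with n hn
        have hconj := Real.HolderConjugate.conjExponent (p := n) (by exact_mod_cast hn)
        have := (hdual.of_one hconj.symm.lt.le hqm.symm.pos).lintegral_eLpNorm'_inner_rpow_le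
          he hconj hqm v
        rwa [one_div (Real.conjExponent _), hconj.symm.one_sub_inv, ← one_div] at this
    _ = (C ^ (1 / 2 : ℝ) * ‖v‖ₑ) ^ q := hD.liminf_eq

end InnerEstimate

/-! ### Mixed norms -/

section SliceNorm

variable {α X : Type*} [MeasurableSpace α] [MeasurableSpace X] {μ : Measure X} [SFinite μ]
  {w : α × X → ℂ}

lemma measurable_eLpNormEssSup_slice (hw : Measurable w) :
    Measurable fun a => eLpNormEssSup (fun x => w (a, x)) μ := by
  refine measurable_of_Iic fun c => ?_
  have hset : (fun a => eLpNormEssSup (fun x => w (a, x)) μ) ⁻¹' Set.Iic c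
      = {a | μ (Prod.mk a ⁻¹' {z | c < ‖w z‖ₑ}) = 0} := by
    ext a
    have hnull : μ (Prod.mk a ⁻¹' {z | c < ‖w z‖ₑ}) = 0 ↔ ∀ᵐ x ∂μ, ‖w (a, x)‖ₑ ≤ c := by
      simp [ae_iff]
    refine Iff.trans ?_ hnull.symm
    exact ⟨fun h => ae_le_eLpNormEssSup.mono fun x hx => hx.trans h, essSup_le_of_ae_le c⟩
  rw [hset]
  exact measurable_measure_prodMk_left (measurableSet_lt measurable_const hw.enorm)
    (measurableSet_singleton 0)

lemma measurable_eLpNorm_slice (hw : Measurable w) (r : ℝ≥0∞) :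
    Measurable fun a => eLpNorm (fun x => w (a, x)) r μ := by
  rcases eq_or_ne r 0 with rfl | h0
  · simp
  rcases eq_or_ne r ∞ with rfl | htop
  · simpa using measurable_eLpNormEssSup_slice hw
  · simpa only [eLpNorm_eq_eLpNorm' h0 htop] using measurable_eLpNorm'_slice hw r.toReal

end SliceNorm

section MixedNorm

variable {d : ℕ} {q r : ℝ≥0∞}

lemma liminf_le_of_forall_le {u : ℕ → ℝ≥0∞} {D : ℝ≥0∞} (h : ∀ n, u n ≤ D) :
    Filter.liminf u Filter.atTop ≤ D :=
  (Filter.liminf_le_liminf (.of_forall h)).trans_eq (Filter.liminf_const D)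

theorem mixedLpNorm_le_of_tendsto (hq : q ≠ 0) {w : ℕ → ℝ × EuclideanSpace ℝ (Fin d) → ℂ}
    {u : ℝ → EuclideanSpace ℝ (Fin d) → ℂ} {D : ℝ≥0∞} (hw : ∀ n, Measurable (w n))
    (hlim : ∀ᵐ t, ∀ x, Filter.Tendsto (fun n => w n (t, x)) Filter.atTop (nhds (u t x)))
    (hD : ∀ n, mixedLpNorm q r (fun t x => w n (t, x)) ≤ D) : mixedLpNorm q r u ≤ D := by
  have hfatou : ∀ᵐ t, eLpNorm (u t) r volume
      ≤ Filter.liminf (fun n => eLpNorm (fun x => w n (t, x)) r volume) Filter.atTop := by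
    filter_upwards [hlim] with t ht
    exact Lp.eLpNorm_lim_le_liminf_eLpNorm
      (fun n => (measurable_slice (hw n) t).aestronglyMeasurable) _ (.of_forall ht)
  rcases eq_or_ne q ∞ with rfl | hqtop
  · simp only [mixedLpNorm, if_true] at hD ⊢
    refine essSup_le_of_ae_le D ?_
    filter_upwards [hfatou, ae_all_iff.2 fun n => ae_le_essSup (μ := volume)
      (f := fun t => eLpNorm (fun x => w n (t, x)) r volume)] with t ht hsup
    exact ht.trans (liminf_le_of_forall_le fun n => (hsup n).trans (hD n))
  · have hq0 : 0 < q.toReal := ENNReal.toReal_pos hq hqtop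
    simp only [mixedLpNorm, if_neg hqtop, one_div, ENNReal.rpow_inv_le_iff hq0] at hD ⊢
    calc ∫⁻ t, eLpNorm (u t) r volume ^ q.toReal
        ≤ ∫⁻ t, Filter.liminf (fun n => eLpNorm (fun x => w n (t, x)) r volume ^ q.toReal)
            Filter.atTop := by
          refine lintegral_mono_ae ?_
          filter_upwards [hfatou] with t ht
          rw [← rpow_liminf hq0]
          gcongr
      _ ≤ Filter.liminf (fun n => ∫⁻ t, eLpNorm (fun x => w n (t, x)) r volume ^ q.toReal)
            Filter.atTop :=
          lintegral_liminf_le fun n => (measurable_eLpNorm_slice (hw n) r).pow_const _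
      _ ≤ D ^ q.toReal := liminf_le_of_forall_le hD

end MixedNorm

section DispersiveMixedNorm

variable {V : Type*} [NormedAddCommGroup V] [InnerProductSpace ℂ V] [CompleteSpace V]
variable {d : ℕ} {σ p m : ℝ} {q r C : ℝ≥0∞} {e : ℝ × EuclideanSpace ℝ (Fin d) → V}

lemma mixedLpNorm_indicator_le_of_lintegral_le {B : Set (EuclideanSpace ℝ (Fin d))}
    (hB : MeasurableSet B) (hq : q ≠ 0) (hqtop : q ≠ ∞) {w : ℝ → EuclideanSpace ℝ (Fin d) → ℂ}
    {D : ℝ≥0∞} (h : ∫⁻ t, eLpNorm (w t) r (volume.restrict B) ^ q.toReal ≤ D ^ q.toReal) :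
    mixedLpNorm q r (fun t => B.indicator (w t)) ≤ D := by
  simp only [mixedLpNorm, if_neg hqtop, one_div, ENNReal.rpow_inv_le_iff
    (ENNReal.toReal_pos hq hqtop), eLpNorm_indicator_eq_eLpNorm_restrict hB]
  exact h

lemma IsDispersive.mixedLpNorm_top_two_inner_le (he : IsDispersive volume σ e) (v : V)
    (B : Set (EuclideanSpace ℝ (Fin d))) :
    mixedLpNorm ∞ 2 (fun t => B.indicator fun x => inner ℂ (e (t, x)) v) ≤ ‖v‖ₑ := by
  rw [mixedLpNorm, if_pos rfl]
  refine essSup_le_of_ae_le _ (.of_forall fun t => (eLpNorm_indicator_le _).trans ?_)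
  rw [eLpNorm_eq_lintegral_rpow_enorm_toReal two_ne_zero ENNReal.ofNat_ne_top, one_div,
    ENNReal.rpow_inv_le_iff (by simp)]
  simpa using he.lintegral_enorm_inner_sq_le v t

variable {B : Set (EuclideanSpace ℝ (Fin d))}

lemma DualEstimate.mixedLpNorm_inner_le (hB : MeasurableSet B) (hBfin : volume B ≠ ∞)
    (hdual : DualEstimate (volume.restrict B) e p m C) (he : IsDispersive (volume.restrict B) σ e)
    (hrp : r.toReal.HolderConjugate p) (hqm : q.toReal.HolderConjugate m) (v : V) :
    mixedLpNorm q r (fun t => B.indicator fun x => inner ℂ (e (t, x)) v)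
      ≤ C ^ (1 / 2 : ℝ) * ‖v‖ₑ := by
  have : IsFiniteMeasure (volume.restrict B) := isFiniteMeasure_restrict.2 hBfin
  have hq := ENNReal.toReal_pos_iff.1 hqm.pos
  have hr := ENNReal.toReal_pos_iff.1 hrp.pos
  refine mixedLpNorm_indicator_le_of_lintegral_le hB hq.1.ne' hq.2.ne ?_
  simpa only [eLpNorm_eq_eLpNorm' hr.1.ne' hr.2.ne] using
    hdual.lintegral_eLpNorm'_inner_rpow_le he hrp hqm v

lemma DualEstimate.mixedLpNorm_top_inner_le (hB : MeasurableSet B) (hBfin : volume B ≠ ∞)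
    (hdual : DualEstimate (volume.restrict B) e 1 m C) (he : IsDispersive (volume.restrict B) σ e)
    (hqm : q.toReal.HolderConjugate m) (v : V) :
    mixedLpNorm q ∞ (fun t => B.indicator fun x => inner ℂ (e (t, x)) v)
      ≤ C ^ (1 / 2 : ℝ) * ‖v‖ₑ := by
  have : IsFiniteMeasure (volume.restrict B) := isFiniteMeasure_restrict.2 hBfin
  have hq := ENNReal.toReal_pos_iff.1 hqm.pos
  refine mixedLpNorm_indicator_le_of_lintegral_le hB hq.1.ne' hq.2.ne ?_
  simpa only [eLpNorm_exponent_top] using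
    hdual.lintegral_eLpNormEssSup_inner_rpow_le he hqm v

end DispersiveMixedNorm

/-! ### Admissible exponents -/

/-- The sharp `σ`-admissible exponent pairs of Keel and Tao; for the Schrödinger equation in
dimension `d` the decay exponent is `σ = d / 2`. -/
structure IsAdmissible (σ : ℝ) (q r : ℝ≥0∞) : Prop where
  two_le_time : 2 ≤ q
  two_le_space : 2 ≤ r
  scaling : 1 / q = ENNReal.ofReal σ * (1 / 2 - 1 / r)
  not_forbidden : ¬(q = 2 ∧ r = ∞ ∧ σ = 1)

lemma holderConjugate_lt_two {p r : ℝ} (h : r.HolderConjugate p) (hr : 2 < r) : p < 2 := by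
  rw [← inv_lt_inv₀ two_pos h.symm.pos, ← h.one_sub_inv]
  have := (inv_lt_inv₀ h.pos two_pos).2 hr
  linarith

lemma two_le_toReal {a : ℝ≥0∞} (h : 2 ≤ a) (htop : a ≠ ∞) : 2 ≤ a.toReal := by
  simpa using ENNReal.toReal_mono htop h

namespace IsAdmissible

variable {σ p m : ℝ} {q r : ℝ≥0∞}

lemma time_ne_zero (h : IsAdmissible σ q r) : q ≠ 0 :=
  (two_pos.trans_le h.two_le_time).ne'

lemma toReal_scaling (h : IsAdmissible σ q r) (hσ : 0 ≤ σ) :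
    1 / q.toReal = σ * (1 / 2 - 1 / r.toReal) := by
  have hle : 1 / r ≤ 1 / 2 := by simpa using h.two_le_space
  have := congrArg ENNReal.toReal h.scaling
  rw [ENNReal.toReal_mul, ENNReal.toReal_sub_of_le hle (by simp), ENNReal.toReal_ofReal hσ] at this
  simpa using this

lemma space_eq_two (h : IsAdmissible σ ∞ r) (hσ : 0 < σ) : r = 2 := by
  have hzero : (1 / 2 - 1 / r : ℝ≥0∞) = 0 := by
    simpa [hσ.not_ge] using h.scaling.symm
  refine le_antisymm ?_ h.two_le_space
  simpa [tsub_eq_zero_iff_le] using hzero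

lemma two_lt_space (h : IsAdmissible σ q r) (hσ : 0 < σ) (hq : q ≠ ∞) (hr : r ≠ ∞) :
    2 < r.toReal := by
  have hq2 := two_le_toReal h.two_le_time hq
  have hr2 := two_le_toReal h.two_le_space hr
  refine hr2.lt_of_ne fun heq => ?_
  have hscal := h.toReal_scaling hσ.le
  rw [← heq, sub_self, mul_zero] at hscal
  exact (one_div_pos.2 (two_pos.trans_le hq2)).ne' hscal

lemma one_lt_decay (h : IsAdmissible σ 2 r) (hσ : 0 < σ) (hr : r ≠ ∞) : 1 < σ := by
  have hscal := h.toReal_scaling hσ.le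
  have hr2 := two_le_toReal h.two_le_space hr
  have : 0 < 1 / r.toReal := one_div_pos.2 (two_pos.trans_le hr2)
  rw [ENNReal.toReal_ofNat] at hscal
  nlinarith

lemma conj_scaling (h : IsAdmissible σ q r) (hσ : 0 < σ) (hrp : r.toReal.HolderConjugate p)
    (hqm : q.toReal.HolderConjugate m) : σ * (1 / p - 1 / 2) = 1 - 1 / m := by
  have hscal := h.toReal_scaling hσ.le
  simp only [one_div, ← hrp.one_sub_inv, ← hqm.one_sub_inv] at hscal ⊢
  linarith

lemma decay_eq_of_space_top (h : IsAdmissible σ q ∞) (hσ : 0 < σ)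
    (hqm : q.toReal.HolderConjugate m) : σ = 2 - 2 / m := by
  have hscal := h.toReal_scaling hσ.le
  simp only [one_div, ENNReal.toReal_top, inv_zero, sub_zero] at hscal
  rw [div_eq_mul_inv, ← hqm.one_sub_inv]
  linarith

lemma two_lt_time_of_space_top (h : IsAdmissible σ q ∞) (hσ : 0 < σ) (hq : q ≠ ∞) :
    2 < q.toReal := by
  refine (two_le_toReal h.two_le_time hq).lt_of_ne fun heq => h.not_forbidden ⟨?_, rfl, ?_⟩
  · rw [← ENNReal.ofReal_toReal hq, ← heq, ENNReal.ofReal_ofNat]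
  · have hscal := h.toReal_scaling hσ.le
    simp only [← heq, ENNReal.toReal_top, div_zero, sub_zero] at hscal
    linarith

end IsAdmissible

section DispersiveStrichartz

variable {V : Type*} [NormedAddCommGroup V] [InnerProductSpace ℂ V] [CompleteSpace V]
variable {d : ℕ} {σ : ℝ} {q r : ℝ≥0∞}

lemma IsAdmissible.exists_mixedLpNorm_inner_le_of_space_ne_top (h : IsAdmissible σ q r) (hσ : 0 < σ)
    (hq : q ≠ ∞) (hr : r ≠ ∞) : ∃ C ≠ ∞, ∀ e : ℝ × EuclideanSpace ℝ (Fin d) → V,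
      IsDispersive volume σ e → ∀ B, MeasurableSet B → volume B ≠ ∞ → ∀ v,
        mixedLpNorm q r (fun t => B.indicator fun x => inner ℂ (e (t, x)) v) ≤ C * ‖v‖ₑ := by
  have hr2 := h.two_lt_space hσ hq hr
  have hq2 := two_le_toReal h.two_le_time hq
  have hrp := Real.HolderConjugate.conjExponent (one_lt_two.trans hr2)
  have hqm := Real.HolderConjugate.conjExponent (one_lt_two.trans_le hq2)
  have hscal := h.conj_scaling hσ hrp hqm
  obtain ⟨C, hC, hdual⟩ : ∃ C ≠ ∞, ∀ {μ : Measure (EuclideanSpace ℝ (Fin d))} [SFinite μ]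
      {e : ℝ × EuclideanSpace ℝ (Fin d) → V}, IsDispersive μ σ e →
        DualEstimate μ e r.toReal.conjExponent q.toReal.conjExponent C := by
    rcases hq2.eq_or_lt with heq | hlt
    · obtain rfl : q = 2 := by rw [← ENNReal.ofReal_toReal hq, ← heq, ENNReal.ofReal_ofNat]
      have hm : (2 : ℝ≥0∞).toReal.conjExponent = 2 := by norm_num [Real.conjExponent]
      rw [hm] at hscal ⊢
      exact IsDispersive.exists_dualEstimate_endpoint (h.one_lt_decay hσ hr) hrp.symm.lt
        (holderConjugate_lt_two hrp hr2) (by linarith)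
    · exact IsDispersive.exists_dualEstimate_interior hσ hrp.symm.lt
        (holderConjugate_lt_two hrp hr2) hqm.symm.lt (holderConjugate_lt_two hqm hlt) hscal
  refine ⟨C ^ (1 / 2 : ℝ), by finiteness, fun e he B hB hBfin v => ?_⟩
  exact (hdual (he.restrict B)).mixedLpNorm_inner_le hB hBfin (he.restrict B) hrp hqm v

lemma IsAdmissible.exists_mixedLpNorm_inner_le_of_space_eq_top (h : IsAdmissible σ q ∞) (hσ : 0 < σ)
    (hq : q ≠ ∞) : ∃ C ≠ ∞, ∀ e : ℝ × EuclideanSpace ℝ (Fin d) → V,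
      IsDispersive volume σ e → ∀ B, MeasurableSet B → volume B ≠ ∞ → ∀ v,
        mixedLpNorm q ∞ (fun t => B.indicator fun x => inner ℂ (e (t, x)) v) ≤ C * ‖v‖ₑ := by
  have hq2 := h.two_lt_time_of_space_top hσ hq
  have hqm := Real.HolderConjugate.conjExponent (one_lt_two.trans hq2)
  have hm2 := holderConjugate_lt_two hqm hq2
  obtain rfl := h.decay_eq_of_space_top hσ hqm
  have hC : hlsConst q.toReal.conjExponent ≠ ∞ := ENNReal.ofReal_ne_top
  refine ⟨(2 * hlsConst q.toReal.conjExponent) ^ (1 / 2 : ℝ), by finiteness,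
    fun e he B hB hBfin v => ?_⟩
  exact (IsDispersive.dualEstimate_one hqm.symm.lt hm2 (he.restrict B)).mixedLpNorm_top_inner_le
    hB hBfin (he.restrict B) hqm v

theorem IsAdmissible.exists_mixedLpNorm_inner_le (h : IsAdmissible σ q r) (hσ : 0 < σ) :
    ∃ C ≠ ∞, ∀ e : ℝ × EuclideanSpace ℝ (Fin d) → V, IsDispersive volume σ e →
      ∀ B, MeasurableSet B → volume B ≠ ∞ → ∀ v,
        mixedLpNorm q r (fun t => B.indicator fun x => inner ℂ (e (t, x)) v) ≤ C * ‖v‖ₑ := by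
  rcases eq_or_ne q ∞ with rfl | hq
  · obtain rfl := h.space_eq_two hσ
    refine ⟨1, ENNReal.one_ne_top, fun e he B _ _ v => ?_⟩
    rw [one_mul]
    exact he.mixedLpNorm_top_two_inner_le v B
  rcases eq_or_ne r ∞ with rfl | hr
  · exact h.exists_mixedLpNorm_inner_le_of_space_eq_top hσ hq
  · exact h.exists_mixedLpNorm_inner_le_of_space_ne_top hσ hq hr

end DispersiveStrichartz

/-! ### The heat kernel at complex times -/

section RightHalfPlane

variable {z w : ℂ}

lemma inv_re_pos (hz : 0 < z.re) : 0 < z⁻¹.re := by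
  rw [inv_re]
  exact div_pos hz (normSq_pos.2 (ne_zero_of_re_pos hz))

lemma arg_ne_pi_of_re_pos (hz : 0 < z.re) : z.arg ≠ Real.pi :=
  (mem_slitPlane_iff_arg.1 (.inl hz)).1

lemma mul_cpow_of_re_pos (hz : 0 < z.re) (hw : 0 < w.re) (a : ℂ) :
    (z * w) ^ a = z ^ a * w ^ a := by
  have hz0 := ne_zero_of_re_pos hz
  have hw0 := ne_zero_of_re_pos hw
  have hzarg := abs_lt.1 (abs_arg_lt_pi_div_two_iff.2 (.inl hz))
  have hwarg := abs_lt.1 (abs_arg_lt_pi_div_two_iff.2 (.inl hw))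
  rw [cpow_def_of_ne_zero (mul_ne_zero hz0 hw0), cpow_def_of_ne_zero hz0, cpow_def_of_ne_zero hw0,
    log_mul hz0 hw0 ⟨by linarith, by linarith⟩, add_mul, Complex.exp_add]

lemma cpow_mul_cpow_mul_inv_add_inv_cpow (hz : 0 < z.re) (hw : 0 < w.re) (a : ℂ) :
    z ^ a * w ^ a * (z⁻¹ + w⁻¹) ^ a = (z + w) ^ a := by
  have hz0 := ne_zero_of_re_pos hz
  have hw0 := ne_zero_of_re_pos hw
  have hsum : 0 < (z⁻¹ + w⁻¹).re := add_pos (inv_re_pos hz) (inv_re_pos hw)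
  have hfactor : z * (z⁻¹ + w⁻¹) = (z + w) * w⁻¹ := by field_simp; ring
  calc z ^ a * w ^ a * (z⁻¹ + w⁻¹) ^ a
      = (z * (z⁻¹ + w⁻¹)) ^ a * w ^ a := by rw [mul_cpow_of_re_pos hz hsum]; ring
    _ = (z + w) ^ a * (w ^ a)⁻¹ * w ^ a := by
        rw [hfactor, mul_cpow_of_re_pos (add_pos hz hw) (inv_re_pos hw),
          inv_cpow _ _ (arg_ne_pi_of_re_pos hw)]
    _ = (z + w) ^ a := inv_mul_cancel_right₀ (by simp [cpow_eq_zero_iff, hw0]) _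

end RightHalfPlane

section HeatKernel

open scoped ComplexConjugate

variable {d : ℕ} {z w : ℂ}

/-- The heat kernel on `ℝ^d`, analytically continued to complex times `z`; at `z = it` it is the
Schrödinger kernel. -/
noncomputable def heatKernel (d : ℕ) (z : ℂ) (x : EuclideanSpace ℝ (Fin d)) : ℂ :=
  (4 * Real.pi * z) ^ (-(d : ℂ) / 2) * cexp (-(4 * z)⁻¹ * ‖x‖ ^ 2)

lemma four_mul_re_pos (hz : 0 < z.re) : 0 < (4 * z).re := by simpa using hz

lemma four_pi_mul_re_pos (hz : 0 < z.re) : 0 < (4 * Real.pi * z).re := by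
  have : (4 * Real.pi * z).re = 4 * Real.pi * z.re := by simp
  rw [this]
  positivity

lemma continuousAt_heatKernel (hz : z ∈ slitPlane) (x : EuclideanSpace ℝ (Fin d)) :
    ContinuousAt (fun p : ℂ × EuclideanSpace ℝ (Fin d) => heatKernel d p.1 p.2) (z, x) := by
  have hpow : 4 * Real.pi * z ∈ slitPlane := by
    rw [mem_slitPlane_iff] at hz ⊢
    simpa [Real.pi_pos, Real.pi_ne_zero] using hz
  have hrate : 4 * z ≠ 0 := mul_ne_zero (by norm_num) (slitPlane_ne_zero hz)
  unfold heatKernel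
  refine .mul (.cpow (by fun_prop) continuousAt_const hpow) (.cexp (.mul ?_ (by fun_prop)))
  exact (continuousAt_fst.const_mul 4 |>.inv₀ hrate).neg

lemma continuous_heatKernel (z : ℂ) : Continuous (heatKernel d z) := by
  unfold heatKernel
  fun_prop

lemma norm_heatKernel (z : ℂ) (x : EuclideanSpace ℝ (Fin d)) :
    ‖heatKernel d z x‖ = (4 * Real.pi * ‖z‖) ^ (-(d : ℝ) / 2) *
      Real.exp (-(4 * z)⁻¹.re * ‖x‖ ^ 2) := by
  have hexp : (-(d : ℂ) / 2) = ((-(d : ℝ) / 2 : ℝ) : ℂ) := by push_cast; rfl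
  rw [heatKernel, norm_mul, Complex.norm_exp, hexp, norm_cpow_real, ← ofReal_pow, re_mul_ofReal,
    neg_re]
  simp [abs_of_pos Real.pi_pos]

lemma norm_heatKernel_le (hz : 0 ≤ z.re) (x : EuclideanSpace ℝ (Fin d)) :
    ‖heatKernel d z x‖ ≤ (4 * Real.pi * ‖z‖) ^ (-(d : ℝ) / 2) := by
  have hrate : 0 ≤ (4 * z)⁻¹.re := by
    rw [inv_re]
    exact div_nonneg (by simpa using hz) (normSq_nonneg _)
  rw [norm_heatKernel]
  refine mul_le_of_le_one_right (by positivity) (Real.exp_le_one_iff.2 ?_)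
  rw [neg_mul, neg_nonpos]
  positivity

lemma norm_heatKernel_le_abs_im (hz : 0 ≤ z.re) (him : z.im ≠ 0)
    (x : EuclideanSpace ℝ (Fin d)) :
    ‖heatKernel d z x‖ ≤ (4 * Real.pi * |z.im|) ^ (-(d : ℝ) / 2) := by
  have : 0 < |z.im| := abs_pos.2 him
  refine (norm_heatKernel_le hz x).trans (Real.rpow_le_rpow_of_nonpos (by positivity) ?_ ?_)
  · gcongr
    exact abs_im_le_norm z
  · rw [neg_div, neg_nonpos]
    positivity

lemma conj_heatKernel (hz : 0 < z.re) (x : EuclideanSpace ℝ (Fin d)) :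
    conj (heatKernel d z x) = heatKernel d (conj z) x := by
  have hpow : conj ((4 * Real.pi * z) ^ (-(d : ℂ) / 2)) =
      (4 * Real.pi * conj z) ^ (-(d : ℂ) / 2) := by
    simpa [conj_ofNat] using
      (conj_cpow _ (-(d : ℂ) / 2) (arg_ne_pi_of_re_pos (four_pi_mul_re_pos hz))).symm
  rw [heatKernel, map_mul, hpow, ← exp_conj]
  simp [heatKernel, conj_ofNat]

lemma integrable_exp_neg_mul_sq_norm {b : ℝ} (hb : 0 < b) :
    Integrable fun x : EuclideanSpace ℝ (Fin d) => Real.exp (-b * ‖x‖ ^ 2) := by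
  have := (GaussianFourier.integrable_cexp_neg_mul_sq_norm_add (b := (b : ℂ)) (by simpa) 0
    (0 : EuclideanSpace ℝ (Fin d))).norm
  refine this.congr (.of_forall fun x => ?_)
  simp only [Complex.norm_exp, zero_mul, add_zero]
  norm_cast

lemma memLp_heatKernel_sub (hz : 0 < z.re) (x : EuclideanSpace ℝ (Fin d)) :
    MemLp (fun y => heatKernel d z (x - y)) 2 volume := by
  have hmeas : AEStronglyMeasurable (fun y => heatKernel d z (x - y)) volume :=
    ((continuous_heatKernel z).comp (by fun_prop)).aestronglyMeasurable
  have hgauss := (integrable_exp_neg_mul_sq_norm (d := d)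
    (mul_pos two_pos (inv_re_pos (four_mul_re_pos hz)))).comp_sub_left x
  rw [memLp_two_iff_integrable_sq_norm hmeas]
  refine (hgauss.const_mul (((4 * Real.pi * ‖z‖) ^ (-(d : ℝ) / 2)) ^ 2)).congr
    (.of_forall fun y => ?_)
  simp only [norm_heatKernel, mul_pow, ← Real.exp_nat_mul]
  congr 2
  push_cast
  ring

lemma lintegral_enorm_heatKernel_sub {s : ℝ} (hs : 0 < s) (x : EuclideanSpace ℝ (Fin d)) :
    ∫⁻ y, ‖heatKernel d s (x - y)‖ₑ = 1 := by
  have hb : 0 < (4 * s)⁻¹ := by positivity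
  have hnorm : ∀ y : EuclideanSpace ℝ (Fin d), ‖heatKernel d s y‖ =
      (4 * Real.pi * s) ^ (-(d : ℝ) / 2) * Real.exp (-(4 * s)⁻¹ * ‖y‖ ^ 2) := fun y => by
    have hrate : (4 * (s : ℂ))⁻¹.re = (4 * s)⁻¹ := by norm_cast
    rw [norm_heatKernel, hrate, norm_real, Real.norm_of_nonneg hs.le]
  rw [lintegral_sub_left_eq_self fun y => ‖heatKernel d s y‖ₑ]
  simp only [← ofReal_norm, hnorm]
  rw [← ofReal_integral_eq_lintegral_ofReal ((integrable_exp_neg_mul_sq_norm hb).const_mul _)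
    (.of_forall fun y => by positivity), integral_const_mul,
    GaussianFourier.integral_rexp_neg_mul_sq_norm hb, finrank_euclideanSpace_fin, div_inv_eq_mul,
    show Real.pi * (4 * s) = 4 * Real.pi * s by ring, neg_div, Real.rpow_neg (by positivity),
    inv_mul_cancel₀ (by positivity), ENNReal.ofReal_one]

lemma integral_gaussian_mul_gaussian {b b' : ℂ} (hb : 0 < b.re) (hb' : 0 < b'.re)
    (x x' : EuclideanSpace ℝ (Fin d)) :
    ∫ y, cexp (-b * ‖x - y‖ ^ 2) * cexp (-b' * ‖x' - y‖ ^ 2) =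
      (Real.pi / (b + b')) ^ ((d : ℂ) / 2) * cexp (-(b * b' / (b + b')) * ‖x - x'‖ ^ 2) := by
  have hsum : 0 < (b + b').re := add_pos hb hb'
  have hne : b + b' ≠ 0 := ne_zero_of_re_pos hsum
  have hshift : ∀ y : EuclideanSpace ℝ (Fin d),
      cexp (-b * ‖x - (y + x)‖ ^ 2) * cexp (-b' * ‖x' - (y + x)‖ ^ 2) =
      cexp (-b' * ‖x - x'‖ ^ 2) *
        cexp (-(b + b') * ‖y‖ ^ 2 + (2 * b') * (inner ℝ (x' - x) y : ℝ)) := by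
    intro y
    have hexpand : ‖x' - (y + x)‖ ^ 2 = ‖x - x'‖ ^ 2 - 2 * inner ℝ (x' - x) y + ‖y‖ ^ 2 := by
      rw [show x' - (y + x) = (x' - x) - y by abel, norm_sub_sq_real, norm_sub_rev x' x]
    have hexpand' : (‖x' - (y + x)‖ : ℂ) ^ 2 =
        ‖x - x'‖ ^ 2 - 2 * (inner ℝ (x' - x) y : ℝ) + ‖y‖ ^ 2 := by exact_mod_cast hexpand
    rw [show x - (y + x) = -y by abel, norm_neg, hexpand', ← Complex.exp_add, ← Complex.exp_add]
    ring_nf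
  rw [← integral_add_right_eq_self (μ := volume) _ x]
  simp_rw [hshift]
  rw [integral_const_mul, GaussianFourier.integral_cexp_neg_mul_sq_norm_add hsum, mul_left_comm,
    ← Complex.exp_add, finrank_euclideanSpace_fin, norm_sub_rev x' x]
  congr 2
  field_simp
  ring

theorem integral_heatKernel_mul_heatKernel (hz : 0 < z.re) (hw : 0 < w.re)
    (x x' : EuclideanSpace ℝ (Fin d)) :
    ∫ y, heatKernel d z (x - y) * heatKernel d w (x' - y) = heatKernel d (z + w) (x - x') := by
  have hz0 := ne_zero_of_re_pos hz
  have hw0 := ne_zero_of_re_pos hw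
  have hzw : 0 < (z + w).re := add_pos hz hw
  have hzw0 := ne_zero_of_re_pos hzw
  have hZ := four_pi_mul_re_pos hz
  have hW := four_pi_mul_re_pos hw
  have hrate : (4 * z)⁻¹ * (4 * w)⁻¹ / ((4 * z)⁻¹ + (4 * w)⁻¹) = (4 * (z + w))⁻¹ := by
    have : (4 * z)⁻¹ + (4 * w)⁻¹ = (z + w) / (4 * z * w) := by field_simp; ring
    rw [this]
    field_simp
  have hmass : (Real.pi / ((4 * z)⁻¹ + (4 * w)⁻¹) : ℂ) ^ ((d : ℂ) / 2) =
      ((4 * Real.pi * z)⁻¹ + (4 * Real.pi * w)⁻¹) ^ (-(d : ℂ) / 2) := by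
    have hpi : (Real.pi : ℂ) ≠ 0 := ofReal_ne_zero.2 Real.pi_ne_zero
    have : (Real.pi / ((4 * z)⁻¹ + (4 * w)⁻¹) : ℂ) =
        ((4 * Real.pi * z)⁻¹ + (4 * Real.pi * w)⁻¹)⁻¹ := by
      rw [← inv_div]
      congr 1
      field_simp
    rw [this, neg_div, cpow_neg, inv_cpow _ _
      (arg_ne_pi_of_re_pos (add_pos (inv_re_pos hZ) (inv_re_pos hW)))]
  calc ∫ y, heatKernel d z (x - y) * heatKernel d w (x' - y)
      = (4 * Real.pi * z) ^ (-(d : ℂ) / 2) * (4 * Real.pi * w) ^ (-(d : ℂ) / 2) *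
        ∫ y, cexp (-(4 * z)⁻¹ * ‖x - y‖ ^ 2) * cexp (-(4 * w)⁻¹ * ‖x' - y‖ ^ 2) := by
        rw [← integral_const_mul]
        simp only [heatKernel, mul_mul_mul_comm]
    _ = heatKernel d (z + w) (x - x') := by
        rw [integral_gaussian_mul_gaussian (inv_re_pos (four_mul_re_pos hz))
          (inv_re_pos (four_mul_re_pos hw)), hrate, hmass, ← mul_assoc,
          cpow_mul_cpow_mul_inv_add_inv_cpow hZ hW, ← mul_add, heatKernel]

end HeatKernel

/-! ### Regularised evaluations -/

section RegularizedEvaluation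

open scoped ComplexConjugate

variable {d : ℕ} {ε : ℝ}

/-- The vector of `L²` representing evaluation at `(t, x)` of the Schrödinger evolution regularised
by the heat flow at time `ε`. Complex conjugation of the kernel turns the time `ε + it` into
`ε - it`. -/
noncomputable def heatVec (d : ℕ) (hε : 0 < ε) (p : ℝ × EuclideanSpace ℝ (Fin d)) :
    Lp ℂ 2 (volume : Measure (EuclideanSpace ℝ (Fin d))) :=
  (memLp_heatKernel_sub (z := ε - p.1 * I) (by simpa using hε) p.2).toLp _

lemma inner_toLp_toLp {α : Type*} [MeasurableSpace α] {μ : Measure α} {f g : α → ℂ}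
    (hf : MemLp f 2 μ) (hg : MemLp g 2 μ) :
    inner ℂ (hf.toLp f) (hg.toLp g) = ∫ y, conj (f y) * g y ∂μ := by
  rw [L2.inner_def]
  refine integral_congr_ae ?_
  filter_upwards [hf.coeFn_toLp, hg.coeFn_toLp] with y hfy hgy
  rw [hfy, hgy, RCLike.inner_apply, mul_comm]

lemma inner_heatVec_toLp (hε : 0 < ε) (t : ℝ) (x : EuclideanSpace ℝ (Fin d))
    {u : EuclideanSpace ℝ (Fin d) → ℂ} (hu : MemLp u 2 volume) :
    inner ℂ (heatVec d hε (t, x)) (hu.toLp u) =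
      ∫ y, heatKernel d (ε + t * I) (x - y) * u y := by
  have hre : 0 < ((ε : ℂ) - t * I).re := by simpa using hε
  rw [heatVec, inner_toLp_toLp]
  simp only [conj_heatKernel hre]
  simp

theorem inner_heatVec_heatVec (hε : 0 < ε) (s t : ℝ) (x y : EuclideanSpace ℝ (Fin d)) :
    inner ℂ (heatVec d hε (s, x)) (heatVec d hε (t, y)) =
      heatKernel d ((2 * ε : ℝ) + (s - t : ℝ) * I) (x - y) := by
  have htime : (ε + s * I) + (ε - t * I) = ((2 * ε : ℝ) + (s - t : ℝ) * I : ℂ) := by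
    push_cast
    ring
  refine (inner_heatVec_toLp hε s x _).trans ?_
  rw [integral_heatKernel_mul_heatKernel (by simpa using hε) (by simpa using hε), htime]

lemma norm_heatVec_sq (hε : 0 < ε) (p : ℝ × EuclideanSpace ℝ (Fin d)) :
    ‖heatVec d hε p‖ ^ 2 = ‖heatKernel d (2 * ε : ℝ) 0‖ := by
  have := congrArg norm (inner_heatVec_heatVec hε p.1 p.1 p.2 p.2)
  simpa [inner_self_eq_norm_sq_to_K] using this

lemma tendsto_of_tendsto_inner {α V : Type*} [NormedAddCommGroup V] [InnerProductSpace ℂ V]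
    {l : Filter α} {e : α → V} {v : V}
    (hinner : Filter.Tendsto (fun a => inner ℂ (e a) v) l (nhds (inner ℂ v v)))
    (hnorm : Filter.Tendsto (fun a => ‖e a‖ ^ 2) l (nhds (‖v‖ ^ 2))) :
    Filter.Tendsto e l (nhds v) := by
  have hsq : Filter.Tendsto (fun a => ‖e a - v‖ ^ 2) l (nhds 0) := by
    have hexpand : (fun a => ‖e a - v‖ ^ 2) =
        fun a => ‖e a‖ ^ 2 - 2 * (inner ℂ (e a) v).re + ‖v‖ ^ 2 :=
      funext fun a => norm_sub_sq (𝕜 := ℂ) (e a) v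
    have hlim : ‖v‖ ^ 2 - 2 * (inner ℂ v v).re + ‖v‖ ^ 2 = 0 := by
      simpa using (norm_sub_sq (𝕜 := ℂ) v v).symm
    rw [hexpand, ← hlim]
    exact (hnorm.sub (((continuous_re.tendsto _).comp hinner).const_mul 2)).add_const _
  rw [tendsto_iff_norm_sub_tendsto_zero]
  simpa [Real.sqrt_sq (norm_nonneg _)] using hsq.sqrt

lemma continuous_heatVec (hε : 0 < ε) : Continuous (heatVec d hε) := by
  refine continuous_iff_continuousAt.2 fun p => tendsto_of_tendsto_inner ?_ ?_
  · have hslit : ((2 * ε : ℝ) + (p.1 - p.1 : ℝ) * I : ℂ) ∈ slitPlane := .inl (by simpa using hε)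
    have hgram : ∀ p', inner ℂ (heatVec d hε p') (heatVec d hε p) =
        heatKernel d ((2 * ε : ℝ) + (p'.1 - p.1 : ℝ) * I) (p'.2 - p.2) :=
      fun p' => inner_heatVec_heatVec hε p'.1 p.1 p'.2 p.2
    simp only [hgram]
    have hcomp := ContinuousAt.comp' (f := fun p' : ℝ × EuclideanSpace ℝ (Fin d) =>
      (((2 * ε : ℝ) + (p'.1 - p.1 : ℝ) * I : ℂ), p'.2 - p.2))
      (continuousAt_heatKernel hslit (p.2 - p.2)) (by fun_prop)
    exact hcomp.tendsto
  · simp only [norm_heatVec_sq]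
    exact tendsto_const_nhds

theorem isDispersive_heatVec (hε : 0 < ε) : IsDispersive volume (d / 2) (heatVec d hε) where
  stronglyMeasurable := (continuous_heatVec hε).stronglyMeasurable
  exists_norm_le :=
    ⟨√‖heatKernel d (2 * ε : ℝ) 0‖, fun p => Real.le_sqrt_of_sq_le (norm_heatVec_sq hε p).le⟩
  dispersion s t x y hst := by
    have hdist : 0 < |s - t| := abs_pos.2 (sub_ne_zero.2 hst)
    have hbound := norm_heatKernel_le_abs_im (d := d)
      (z := (2 * ε : ℝ) + (s - t : ℝ) * I) (by simpa using hε.le)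
      (by simpa using sub_ne_zero.2 hst) (x - y)
    have hdrop : (4 * Real.pi * |s - t|) ^ (-(d / 2 : ℝ)) ≤ |s - t| ^ (-(d / 2 : ℝ)) := by
      refine Real.rpow_le_rpow_of_nonpos hdist ?_ (neg_nonpos.2 (by positivity))
      exact le_mul_of_one_le_left hdist.le (by linarith [Real.pi_gt_three])
    rw [inner_heatVec_heatVec, rieszKernel, ENNReal.ofReal_rpow_of_pos hdist, ← ofReal_norm]
    refine ENNReal.ofReal_le_ofReal (hbound.trans ?_)
    simpa [neg_div] using hdrop
  energy t x := by
    simp only [inner_heatVec_heatVec, sub_self, ofReal_zero, zero_mul, add_zero]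
    exact (lintegral_enorm_heatKernel_sub (by positivity) x).le

end RegularizedEvaluation

/-! ### Passage to the Schrödinger evolution -/

section Schrodinger

variable {d : ℕ} {u : EuclideanSpace ℝ (Fin d) → ℂ} {t : ℝ}

lemma schrodingerProp_eq_integral_heatKernel (u : EuclideanSpace ℝ (Fin d) → ℂ) (ht : t ≠ 0)
    (x : EuclideanSpace ℝ (Fin d)) :
    schrodingerProp u t x = ∫ y, heatKernel d (t * I) (x - y) * u y := by
  have ht' : (t : ℂ) ≠ 0 := ofReal_ne_zero.2 ht
  have hrate : ∀ a : ℝ, I * (a : ℂ) ^ 2 / (4 * t) = -(4 * (t * I))⁻¹ * a ^ 2 := fun a => by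
    field_simp
    rw [I_sq]
    ring
  have htime : 4 * (Real.pi : ℂ) * I * t = 4 * Real.pi * (t * I) := by ring
  rw [schrodingerProp, if_neg ht, ← integral_const_mul, htime]
  simp only [heatKernel, hrate, ofReal_pow, mul_assoc]

theorem tendsto_integral_heatKernel (hu : Integrable u) (ht : t ≠ 0)
    (x : EuclideanSpace ℝ (Fin d)) {ε : ℕ → ℝ} (hε : ∀ n, 0 < ε n)
    (hlim : Filter.Tendsto ε Filter.atTop (nhds 0)) :
    Filter.Tendsto (fun n => ∫ y, heatKernel d (ε n + t * I) (x - y) * u y) Filter.atTop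
      (nhds (schrodingerProp u t x)) := by
  rw [schrodingerProp_eq_integral_heatKernel u ht]
  refine tendsto_integral_of_dominated_convergence
    (fun y => (4 * Real.pi * |t|) ^ (-(d : ℝ) / 2) * ‖u y‖) (fun n => ?_) (hu.norm.const_mul _)
    (fun n => .of_forall fun y => ?_) (.of_forall fun y => ?_)
  · exact ((continuous_heatKernel _).comp (by fun_prop)).aestronglyMeasurable.mul
      hu.aestronglyMeasurable
  · rw [norm_mul]
    gcongr
    simpa using norm_heatKernel_le_abs_im (z := ε n + t * I) (by simpa using (hε n).le)
      (by simpa using ht) (x - y)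
  · have hslit : (t * I : ℂ) ∈ slitPlane := .inr (by simpa using ht)
    have htime : Filter.Tendsto (fun n => ((ε n + t * I : ℂ), x - y)) Filter.atTop
        (nhds (t * I, x - y)) := by
      have := (continuous_ofReal.tendsto 0).comp hlim
      simpa using (this.add_const (t * I : ℂ)).prodMk_nhds tendsto_const_nhds
    exact ((continuousAt_heatKernel hslit (x - y)).tendsto.comp htime).mul_const (u y)

/-- The evolution regularised at time `1 / (n + 1)` and cut off to the ball of radius `n`, as a
function on space-time; this tends to the Schrödinger evolution. -/
noncomputable def regularizedEvolution (v : Lp ℂ 2 (volume : Measure (EuclideanSpace ℝ (Fin d))))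
    (n : ℕ) (p : ℝ × EuclideanSpace ℝ (Fin d)) : ℂ :=
  (Metric.ball 0 n).indicator
    (fun x => inner ℂ (heatVec d (Nat.one_div_pos_of_nat (α := ℝ) (n := n)) (p.1, x)) v) p.2

lemma measurable_regularizedEvolution
    (v : Lp ℂ 2 (volume : Measure (EuclideanSpace ℝ (Fin d)))) (n : ℕ) :
    Measurable (regularizedEvolution v n) := by
  have hinner : Measurable fun p : ℝ × EuclideanSpace ℝ (Fin d) =>
      inner ℂ (heatVec d (Nat.one_div_pos_of_nat (α := ℝ) (n := n)) p) v :=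
    ((continuous_heatVec _).inner continuous_const).measurable
  exact hinner.indicator (measurable_snd measurableSet_ball)

lemma tendsto_regularizedEvolution (hu : Integrable u) (hu2 : MemLp u 2) (ht : t ≠ 0)
    (x : EuclideanSpace ℝ (Fin d)) :
    Filter.Tendsto (fun n => regularizedEvolution (hu2.toLp u) n (t, x)) Filter.atTop
      (nhds (schrodingerProp u t x)) := by
  have hball : ∀ᶠ n : ℕ in Filter.atTop, x ∈ Metric.ball (0 : EuclideanSpace ℝ (Fin d)) n := by
    filter_upwards [tendsto_natCast_atTop_atTop.eventually_gt_atTop ‖x‖] with n hn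
    simpa using hn
  refine (tendsto_integral_heatKernel hu ht x (fun n => Nat.one_div_pos_of_nat)
    tendsto_one_div_add_atTop_nhds_zero_nat).congr' ?_
  filter_upwards [hball] with n hn
  rw [regularizedEvolution, Set.indicator_of_mem hn, inner_heatVec_toLp]

end Schrodinger

lemma isAdmissible_half {d : ℕ} {q r : ℝ≥0∞} (hq2 : 2 ≤ q) (hr2 : 2 ≤ r)
    (hadm : 1 / q = ((d : ℝ≥0∞) / 2) * (1 / 2 - 1 / r)) (hexc : ¬(q = 2 ∧ r = ∞ ∧ d = 2)) :
    IsAdmissible (d / 2) q r where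
  two_le_time := hq2
  two_le_space := hr2
  scaling := by
    rw [hadm, ENNReal.ofReal_div_of_pos two_pos, ENNReal.ofReal_natCast, ENNReal.ofReal_ofNat]
  not_forbidden := fun ⟨hq, hr, hd⟩ =>
    hexc ⟨hq, hr, by exact_mod_cast (div_eq_one_iff_eq (two_ne_zero' ℝ)).1 hd⟩

theorem strichartz_homogeneous_general (d : ℕ) (hd : 1 ≤ d) (q r : ℝ≥0∞)
    (hq2 : 2 ≤ q) (hr2 : 2 ≤ r)
    (hadm : 1 / q = ((d : ℝ≥0∞) / 2) * (1 / 2 - 1 / r))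
    (hexc : ¬(q = 2 ∧ r = ∞ ∧ d = 2)) :
    ∃ C : ℝ, 0 < C ∧ ∀ u₀ : EuclideanSpace ℝ (Fin d) → ℂ, Integrable u₀ → MemLp u₀ 2 →
      mixedLpNorm q r (schrodingerProp u₀) ≤ ENNReal.ofReal C * eLpNorm u₀ 2 volume := by
  have hadmissible := isAdmissible_half hq2 hr2 hadm hexc
  obtain ⟨C, hC, hbound⟩ := hadmissible.exists_mixedLpNorm_inner_le (d := d)
    (V := Lp ℂ 2 (volume : Measure (EuclideanSpace ℝ (Fin d)))) (by positivity)
  have hCle : C ≤ ENNReal.ofReal (C.toReal + 1) := by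
    rw [ENNReal.ofReal_add ENNReal.toReal_nonneg one_pos.le, ENNReal.ofReal_toReal hC]
    exact le_self_add
  refine ⟨C.toReal + 1, by positivity, fun u₀ hu hu2 => ?_⟩
  have hnorm : ‖hu2.toLp u₀‖ₑ = eLpNorm u₀ 2 volume := by
    rw [Lp.enorm_def, eLpNorm_congr_ae hu2.coeFn_toLp]
  refine mixedLpNorm_le_of_tendsto hadmissible.time_ne_zero
    (measurable_regularizedEvolution (hu2.toLp u₀)) ?_ fun n => ?_
  · filter_upwards [Measure.ae_ne volume (0 : ℝ)] with t ht x
    exact tendsto_regularizedEvolution hu hu2 ht x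
  · calc mixedLpNorm q r (fun t x => regularizedEvolution (hu2.toLp u₀) n (t, x))
        ≤ C * ‖hu2.toLp u₀‖ₑ := hbound _ (isDispersive_heatVec _) _ measurableSet_ball
          measure_ball_lt_top.ne _
      _ ≤ ENNReal.ofReal (C.toReal + 1) * eLpNorm u₀ 2 volume := by
          rw [hnorm]
          gcongr

/-- Homogeneous Strichartz estimate for the free Schrödinger evolution with a
Schrödinger-admissible exponent pair `(q, r)`. -/
theorem strichartz_homogeneous (d : ℕ) (hd : 1 ≤ d) (q r : ℝ≥0∞)
    (hq2 : 2 ≤ q) (hr2 : 2 ≤ r)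
    (hadm : 1 / q = ((d : ℝ≥0∞) / 2) * (1 / 2 - 1 / r))
    (hexc : ¬(q = 2 ∧ r = ∞ ∧ d = 2)) :
    ∃ C : ℝ, 0 < C ∧
      ∀ u₀ : SchwartzMap (EuclideanSpace ℝ (Fin d)) ℂ,
        mixedLpNorm q r (fun t x => schrodingerProp (fun y => u₀ y) t x)
          ≤ ENNReal.ofReal C * eLpNorm (fun x => u₀ x) 2 volume := by
  obtain ⟨C, hC, hbound⟩ := strichartz_homogeneous_general d hd q r hq2 hr2 hadm hexc
  exact ⟨C, hC, fun u₀ => hbound u₀ u₀.integrable (u₀.memLp 2)⟩
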